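/- Let p ≥ q ≥ 1 and n = p + q. For γ = (γ₁ ≥ … ≥ γ_n ≥ 0) ∈ ℝⁿ, s = (s₁ ≥ … ≥ s_q ≥ 0) ∈ ℝ^q and t = (t₁ ≥ … ≥ t_q ≥ 0) ∈ ℝ^q, the triple (γ, s, t) belongs to S(p,q) (i.e. there exists an n×n complex matrix X with s(X) = γ, s(X₁₂) = s and s(X₂₁) = t) if and only if (γ̂, ŝ^{p,q}, t̂^{p,q}) ∈ LR(n,n). -/

import Mathlib

open Matrix

/-- Eigenvalues of a (Hermitian) complex matrix, listed in decreasing order. -/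
noncomputable def eigVec {k : ℕ} (X : Matrix (Fin k) (Fin k) ℂ) (hX : X.IsHermitian) :
    Fin k → ℝ :=
  fun i => hX.eigenvalues (Tuple.sort hX.eigenvalues i.rev)

/-- The `i`-th (0-based) singular value of a rectangular complex matrix:
the square root of the `i`-th largest eigenvalue of `Y * Yᴴ` (and `0` for `i ≥ a`). -/
noncomputable def sval {a b : ℕ} (Y : Matrix (Fin a) (Fin b) ℂ) (i : ℕ) : ℝ :=
  if h : i < a then
    Real.sqrt (eigVec (Y * Yᴴ) (Matrix.isHermitian_mul_conjTranspose_self Y) ⟨i, h⟩)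
  else 0

/-- The Horn cone `Horn(k)`. -/
def Horn (k : ℕ) : Set ((Fin k → ℝ) × (Fin k → ℝ) × (Fin k → ℝ)) :=
  { v | ∃ (X Y : Matrix (Fin k) (Fin k) ℂ) (hX : X.IsHermitian) (hY : Y.IsHermitian),
      v.1 = eigVec X hX ∧ v.2.1 = eigVec Y hY ∧ v.2.2 = eigVec (X + Y) (hX.add hY) }

/-- The Littlewood–Richardson cone `LR(m,n)`. -/
def LRcone (m n : ℕ) : Set ((Fin (m + n) → ℝ) × (Fin m → ℝ) × (Fin n → ℝ)) :=
  { v | ∃ (M : Matrix (Fin (m + n)) (Fin (m + n)) ℂ) (hM : M.IsHermitian),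
      v.1 = eigVec M hM ∧
      v.2.1 = eigVec (M.submatrix (Fin.castAdd n) (Fin.castAdd n))
        (hM.submatrix (Fin.castAdd n)) ∧
      v.2.2 = eigVec (M.submatrix (Fin.natAdd m) (Fin.natAdd m))
        (hM.submatrix (Fin.natAdd m)) }

/-- Top-left `p × p` block. -/
def blockTL (p q : ℕ) (X : Matrix (Fin (p + q)) (Fin (p + q)) ℂ) : Matrix (Fin p) (Fin p) ℂ :=
  X.submatrix (Fin.castAdd q) (Fin.castAdd q)

/-- Top-right `p × q` block. -/
def blockTR (p q : ℕ) (X : Matrix (Fin (p + q)) (Fin (p + q)) ℂ) : Matrix (Fin p) (Fin q) ℂ :=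
  X.submatrix (Fin.castAdd q) (Fin.natAdd p)

/-- Bottom-left `q × p` block. -/
def blockBL (p q : ℕ) (X : Matrix (Fin (p + q)) (Fin (p + q)) ℂ) : Matrix (Fin q) (Fin p) ℂ :=
  X.submatrix (Fin.natAdd p) (Fin.castAdd q)

/-- Bottom-right `q × q` block. -/
def blockBR (p q : ℕ) (X : Matrix (Fin (p + q)) (Fin (p + q)) ℂ) : Matrix (Fin q) (Fin q) ℂ :=
  X.submatrix (Fin.natAdd p) (Fin.natAdd p)

/-- `λ* = (−λ_k, …, −λ_1)`. -/
def starVec {k : ℕ} (x : Fin k → ℝ) : Fin k → ℝ := fun i => -x i.rev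

/-- `ŝ^{p,q} = (s₁, …, s_q, 0, …, 0, −s_q, …, −s₁) ∈ ℝ^{p+q}` (with `p − q` middle zeros). -/
noncomputable def hatPQ (p q : ℕ) (s : Fin q → ℝ) : Fin (p + q) → ℝ :=
  fun i =>
    if h : (i : ℕ) < q then s ⟨i, h⟩
    else if h' : (i : ℕ) < p then 0
    else -s ⟨p + q - 1 - i, by have := i.isLt; omega⟩

/-- The cone `A(p,q)`: pairs `(e(X), s(X₁₂))` for `X` Hermitian of size `p+q`. -/
def coneA (p q : ℕ) : Set ((Fin (p + q) → ℝ) × (Fin q → ℝ)) :=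
  { v | ∃ (X : Matrix (Fin (p + q)) (Fin (p + q)) ℂ) (hX : X.IsHermitian),
      v.1 = eigVec X hX ∧ ∀ i : Fin q, v.2 i = sval (blockTR p q X) (i : ℕ) }

/-- The cone `S(p,q)`: triples `(s(X), s(X₁₂), s(X₂₁))`. -/
def coneS (p q : ℕ) : Set ((Fin (p + q) → ℝ) × (Fin q → ℝ) × (Fin q → ℝ)) :=
  { v | ∃ X : Matrix (Fin (p + q)) (Fin (p + q)) ℂ,
      (∀ i : Fin (p + q), v.1 i = sval X (i : ℕ)) ∧
      (∀ i : Fin q, v.2.1 i = sval (blockTR p q X) (i : ℕ)) ∧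
      (∀ i : Fin q, v.2.2 i = sval (blockBL p q X) (i : ℕ)) }

/-- The cone `T(p,q)`: triples `(s(X), s(X₁₁), s(X₂₂))`. -/
def coneT (p q : ℕ) : Set ((Fin (p + q) → ℝ) × (Fin p → ℝ) × (Fin q → ℝ)) :=
  { v | ∃ X : Matrix (Fin (p + q)) (Fin (p + q)) ℂ,
      (∀ i : Fin (p + q), v.1 i = sval X (i : ℕ)) ∧
      (∀ i : Fin p, v.2.1 i = sval (blockTL p q X) (i : ℕ)) ∧
      (∀ i : Fin q, v.2.2 i = sval (blockBR p q X) (i : ℕ)) }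

/-- `μ(A) = (a_r − r ≥ … ≥ a₂ − 2 ≥ a₁ − 1)` as a decreasing real vector, for
`A = {a₁ < … < a_r}` a subset of `[n]` (0-based indexing internally). -/
noncomputable def muVec {n r : ℕ} (A : Finset (Fin n)) (h : A.card = r) : Fin r → ℝ :=
  fun k => (((A.orderIsoOfFin h k.rev : Fin n) : ℕ) : ℝ) - ((k.rev : ℕ) : ℝ)

/-- `A^o = {ℓ + 1 − a : a ∈ A}` inside `[ℓ]`. -/
def opp {n : ℕ} (A : Finset (Fin n)) : Finset (Fin n) := A.image Fin.rev

/-- `|s|_{K ∩ [q]}` where `K ⊆ [n]`, `s ∈ ℝ^q` and `[q]` is viewed inside `[n]`. -/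
noncomputable def sumRestr {n q : ℕ} (s : Fin q → ℝ) (K : Finset (Fin n)) : ℝ :=
  ∑ i ∈ K, (if h : (i : ℕ) < q then s ⟨i, h⟩ else 0)

/-- The augmented matrix `Ŷ^{p,q} = [[0, Y], [Yᴴ, 0]]` of size `p + q`. -/
def hatM (p q : ℕ) (Y : Matrix (Fin p) (Fin q) ℂ) : Matrix (Fin (p + q)) (Fin (p + q)) ℂ :=
  Matrix.reindex finSumFinEquiv finSumFinEquiv (Matrix.fromBlocks 0 Y Yᴴ 0)

/-!
A matrix `X` of size `n` corresponds to its Hermitian dilation `[[0, X], [Xᴴ, 0]]` of size `2n`,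
whose spectrum is `s(X)` together with `-s(X)`. Exchanging the second halves of the two copies of
`n` turns the two diagonal `n × n` blocks of the dilation into the dilations of `X₁₂` and of
`X₂₁ᴴ`, so that `S(p,q)` embeds in `LR(n,n)`. Conversely, the dilations are the Hermitian matrices
that anticommute with a certain diagonal sign matrix `J` ("odd" matrices), so one has to show: if
`M` and a block diagonal `A` are Hermitian and odd, and some unitary conjugate of `M` has block
diagonal part `A`, then so has the conjugate of `M` by some unitary that commutes with `J`.

To prove this, minimise `‖A - blockPart (k M k*)‖` over the unitary `k` commuting with `J`, and let
`D` be the defect at a minimiser. The first variation shows that `D` commutes with `A` and with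
`k M k*`, so after a block diagonal change of basis `A`, `D` and `k M k*` are `a`, `d` and `u m u*`
with real diagonal `a`, `d`, `m`. Consider the map `(β', χ, β) ↦ β' χ β` on matrices that are
triangular for `a`, for `d` and for `m`. If a nonzero `ν u*` were normal to its image at `u`, then
so would be the variants of `ν` and `i ν` that are odd for `J`, and one of these contradicts the
second variation. Hence the map is a submersion at `u`; being polynomial it has dense image, so
every unitary matrix satisfies the closed incidence condition between the Schubert varieties
attached to `d` in the flags of `a` and `m`. For the given unitary with block diagonal part `A` this
yields `∑ a ≤ ∑ m` over the indices with `d > 0`, while the definition of the defect yields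
`∑ d = ∑ (a - m)` over the same indices. Therefore `d ≤ 0`; as `D` is odd its trace is zero, and so
`D = 0`.
-/

section Support

variable {ι κ ρ R : Type*}

/-- The entries of the matrix `X` vanish outside the positions allowed by the relation `P`. -/
def SupportedOn [Zero R] (P : ι → κ → Prop) (X : Matrix ι κ R) : Prop :=
  ∀ i j, X i j ≠ 0 → P i j

theorem SupportedOn.zero [Zero R] (P : ι → κ → Prop) :
    SupportedOn P (0 : Matrix ι κ R) :=
  fun _ _ h => absurd rfl h

theorem SupportedOn.add [AddZeroClass R] {P : ι → κ → Prop} {X Y : Matrix ι κ R}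
    (hX : SupportedOn P X) (hY : SupportedOn P Y) : SupportedOn P (X + Y) := by
  intro i j hij
  by_contra hP
  exact hij (by
    rw [Matrix.add_apply, not_imp_comm.1 (hX i j) hP, not_imp_comm.1 (hY i j) hP, add_zero])

theorem SupportedOn.smul {S : Type*} [Zero R] [SMulZeroClass S R] {P : ι → κ → Prop}
    {X : Matrix ι κ R} (hX : SupportedOn P X) (c : S) : SupportedOn P (c • X) :=
  fun i j hij => hX i j fun h => hij (by rw [Matrix.smul_apply, h, smul_zero])

theorem SupportedOn.neg [NegZeroClass R] {P : ι → κ → Prop} {X : Matrix ι κ R}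
    (hX : SupportedOn P X) : SupportedOn P (-X) :=
  fun i j hij => hX i j fun h => hij (by rw [neg_apply, h, neg_zero])

theorem SupportedOn.sub [AddGroup R] {P : ι → κ → Prop} {X Y : Matrix ι κ R}
    (hX : SupportedOn P X) (hY : SupportedOn P Y) : SupportedOn P (X - Y) := by
  rw [sub_eq_add_neg]
  exact hX.add hY.neg

theorem SupportedOn.conjTranspose [AddMonoid R] [StarAddMonoid R] {P : ι → κ → Prop}
    {X : Matrix ι κ R} (hX : SupportedOn P X) : SupportedOn (fun j i => P i j) Xᴴ :=
  fun j i hji => hX i j fun h => hji (by rw [conjTranspose_apply, h, star_zero])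

theorem SupportedOn.mono [Zero R] {P Q : ι → κ → Prop} {X : Matrix ι κ R}
    (hX : SupportedOn P X) (h : ∀ i j, P i j → Q i j) : SupportedOn Q X :=
  fun i j hij => h i j (hX i j hij)

theorem SupportedOn.mul [Fintype κ] [NonUnitalNonAssocSemiring R] {P : ι → κ → Prop}
    {Q : κ → ρ → Prop} {T : ι → ρ → Prop} {X : Matrix ι κ R} {Y : Matrix κ ρ R}
    (hX : SupportedOn P X) (hY : SupportedOn Q Y) (h : ∀ i j k, P i j → Q j k → T i k) :
    SupportedOn T (X * Y) := by
  intro i k hik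
  obtain ⟨j, -, hj⟩ := Finset.exists_ne_zero_of_sum_ne_zero (mul_apply (M := X) ▸ hik)
  exact h i j k (hX i j (left_ne_zero_of_mul hj)) (hY j k (right_ne_zero_of_mul hj))

theorem supportedOn_diagonal [DecidableEq ι] [Zero R] {P : ι → ι → Prop} (hP : ∀ i, P i i)
    (d : ι → R) : SupportedOn P (diagonal d) := by
  intro i j hij
  obtain rfl : i = j := by_contra fun h => hij (diagonal_apply_ne d h)
  exact hP i

theorem supportedOn_one [DecidableEq ι] [Zero R] [One R] {P : ι → ι → Prop} (hP : ∀ i, P i i) :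
    SupportedOn P (1 : Matrix ι ι R) :=
  supportedOn_diagonal hP _

theorem supportedOn_single [DecidableEq ι] [DecidableEq κ] [Zero R] {P : ι → κ → Prop} {i : ι}
    {j : κ} (h : P i j) (r : R) : SupportedOn P (single i j r) := by
  intro k l hkl
  obtain ⟨rfl, rfl⟩ : i = k ∧ j = l := by_contra fun hne => hkl (single_apply_of_ne _ _ _ _ _ hne)
  exact h

open scoped Classical in
/-- The projection of matrices onto those supported on `P`: entries outside `P` are erased. -/
noncomputable def mask [Semiring R] (P : ι → κ → Prop) : Matrix ι κ R →ₗ[R] Matrix ι κ R where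
  toFun X := of fun i j => if P i j then X i j else 0
  map_add' X Y := by ext i j; by_cases h : P i j <;> simp [h]
  map_smul' c X := by ext i j; by_cases h : P i j <;> simp [h]

open scoped Classical in
theorem mask_apply [Semiring R] (P : ι → κ → Prop) (X : Matrix ι κ R) (i : ι) (j : κ) :
    mask P X i j = if P i j then X i j else 0 :=
  rfl

theorem supportedOn_mask [Semiring R] (P : ι → κ → Prop) (X : Matrix ι κ R) :
    SupportedOn P (mask P X) :=
  fun _ _ hij => by_contra fun h => hij (if_neg h)

theorem SupportedOn.mask [Semiring R] {Q : ι → κ → Prop} {X : Matrix ι κ R}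
    (hX : SupportedOn Q X) (P : ι → κ → Prop) :
    SupportedOn (fun i j => P i j ∧ Q i j) (_root_.mask P X) :=
  fun i j hij => ⟨supportedOn_mask P X i j hij, hX i j fun h => hij (by simp [mask_apply, h])⟩

theorem SupportedOn.mask_eq [Semiring R] {P : ι → κ → Prop} {X : Matrix ι κ R}
    (hX : SupportedOn P X) : _root_.mask P X = X := by
  ext i j
  by_cases h : P i j
  · simp [mask_apply, h]
  · simp [mask_apply, h, not_imp_comm.1 (hX i j) h]

theorem map_mask {S : Type*} [Semiring R] [Semiring S] (φ : R →+* S) (P : ι → κ → Prop)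
    (X : Matrix ι κ R) : (mask P X).map φ = mask P (X.map φ) := by
  ext i j
  by_cases h : P i j <;> simp [mask_apply, h]

end Support

section PolynomialMaps

open MvPolynomial

theorem exists_basicOpen_subset_range_comap {R S : Type*} [CommRing R] [IsDomain R] [CommRing S]
    [IsDomain S] (f : R →+* S) (hf : f.FinitePresentation) (hinj : Function.Injective f) :
    ∃ r : R, r ≠ 0 ∧
      (PrimeSpectrum.basicOpen r : Set (PrimeSpectrum R)) ⊆ Set.range (PrimeSpectrum.comap f) := by
  obtain ⟨S, hS⟩ := PrimeSpectrum.exists_constructibleSetData_iff.mpr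
    (PrimeSpectrum.isConstructible_range_comap hf)
  have hbot : (⊥ : PrimeSpectrum R) ∈ S.toSet := by
    rw [hS]
    exact ⟨⊥, PrimeSpectrum.ext (Ideal.comap_bot_of_injective f hinj)⟩
  obtain ⟨C, hC, hCbot⟩ : ∃ C ∈ S, (⊥ : PrimeSpectrum R) ∈ C.toSet := by
    simpa [PrimeSpectrum.ConstructibleSetData.toSet] using hbot
  have hg : ∀ i, C.g i = 0 := fun i => hCbot.1 ⟨i, rfl⟩
  refine ⟨C.f, fun h => hCbot.2 (by rintro _ rfl; exact h), fun P hP => ?_⟩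
  rw [← hS]
  refine Set.mem_biUnion hC ⟨?_, fun h => hP (h rfl)⟩
  rintro _ ⟨i, rfl⟩
  rw [hg i]
  exact Ideal.zero_mem _

theorem eq_zero_of_eventually_eval_eq_zero {τ : Type*} (P : MvPolynomial τ ℂ) (z₀ : τ → ℂ)
    (h : ∀ᶠ z in nhds z₀, eval z P = 0) : P = 0 := by
  rw [nhds_pi, Filter.eventually_iff, Filter.mem_pi'] at h
  obtain ⟨I, t, ht, hsub⟩ := h
  refine funext_set t (fun i => infinite_of_mem_nhds _ (ht i)) fun x hx => ?_
  rw [map_zero]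
  exact hsub fun i _ => hx i trivial

theorem dense_setOf_eval_ne_zero {τ : Type*} {P : MvPolynomial τ ℂ} (hP : P ≠ 0) :
    Dense {z : τ → ℂ | eval z P ≠ 0} := by
  intro z₀
  rw [mem_closure_iff_frequently]
  intro h
  refine hP (eq_zero_of_eventually_eval_eq_zero P z₀ ?_)
  filter_upwards [h] with z hz
  simpa using hz

variable {σ τ K : Type*} [Finite σ] [Finite τ]

theorem finitePresentation_aeval [CommRing K] (p : τ → MvPolynomial σ K) :
    (aeval p : MvPolynomial τ K →ₐ[K] MvPolynomial σ K).toRingHom.FinitePresentation := by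
  refine RingHom.FinitePresentation.of_comp_finiteType (algebraMap K (MvPolynomial τ K)) ?_ ?_
  · rw [show (aeval p).toRingHom.comp (algebraMap K _) = algebraMap K _ from
      (aeval p).comp_algebraMap]
    exact RingHom.finitePresentation_algebraMap.mpr inferInstance
  · exact RingHom.finiteType_algebraMap.mpr inferInstance

theorem exists_eval_ne_zero_imp_mem_range [Field K] [IsAlgClosed K] (p : τ → MvPolynomial σ K)
    (hinj : Function.Injective (aeval p : MvPolynomial τ K →ₐ[K] MvPolynomial σ K)) :
    ∃ f : MvPolynomial τ K, f ≠ 0 ∧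
      ∀ z, eval z f ≠ 0 → z ∈ Set.range fun (x : σ → K) t => eval x (p t) := by
  obtain ⟨f, hf, hsub⟩ :=
    exists_basicOpen_subset_range_comap _ (finitePresentation_aeval p) hinj
  refine ⟨f, hf, fun z hz => ?_⟩
  have hmax : (vanishingIdeal K {z}).IsMaximal := inferInstance
  obtain ⟨P, hP⟩ := @hsub ⟨vanishingIdeal K {z}, hmax.isPrime⟩ fun h =>
    hz (by simpa using (mem_vanishingIdeal_singleton_iff z f).1 h)
  obtain ⟨m, hm, hPm⟩ := P.asIdeal.exists_le_maximal P.2.ne_top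
  obtain ⟨w, rfl⟩ := isMaximal_iff_eq_vanishingIdeal_singleton.1 hm
  refine ⟨w, _root_.funext fun t => ?_⟩
  have hX : X t - C (z t) ∈ vanishingIdeal K {z} := by
    rw [mem_vanishingIdeal_singleton_iff]
    simp
  rw [← show _ = vanishingIdeal K {z} from congrArg PrimeSpectrum.asIdeal hP] at hX
  simpa [sub_eq_zero] using (mem_vanishingIdeal_singleton_iff w _).1 (hPm hX)

theorem denseRange_eval_of_range_mem_nhds (p : τ → MvPolynomial σ ℂ) (z₀ : τ → ℂ)
    (h : Set.range (fun (x : σ → ℂ) t => eval x (p t)) ∈ nhds z₀) :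
    DenseRange fun (x : σ → ℂ) t => eval x (p t) := by
  have heval (x : σ → ℂ) (P : MvPolynomial τ ℂ) :
      eval x (aeval p P) = eval (fun t => eval x (p t)) P := by
    rw [map_aeval p (eval x) P]
    congr 1
    ext <;> simp
  obtain ⟨f, hf, hrange⟩ := exists_eval_ne_zero_imp_mem_range p <| by
    rw [injective_iff_map_eq_zero]
    intro P hP
    refine eq_zero_of_eventually_eval_eq_zero P z₀ ?_
    filter_upwards [h]
    rintro _ ⟨x, rfl⟩
    rw [← heval, hP, map_zero]
  exact (dense_setOf_eval_ne_zero hf).mono hrange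

theorem denseRange_map_eval_of_range_mem_nhds {ι κ : Type*} [Finite ι] [Finite κ]
    (Q : Matrix ι κ (MvPolynomial σ ℂ)) (Z₀ : Matrix ι κ ℂ)
    (h : Set.range (fun x : σ → ℂ => Q.map (eval x)) ∈ nhds Z₀) :
    DenseRange fun x : σ → ℂ => Q.map (eval x) := by
  let e : (ι × κ → ℂ) → Matrix ι κ ℂ := fun z => of fun i j => z (i, j)
  have he : Continuous e := continuous_matrix fun i j => continuous_apply (i, j)
  have hsurj : Function.Surjective e := fun Z => ⟨fun t => Z t.1 t.2, rfl⟩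
  have hdense := denseRange_eval_of_range_mem_nhds (fun t : ι × κ => Q t.1 t.2)
      (fun t => Z₀ t.1 t.2) <| by
    filter_upwards [he.continuousAt.preimage_mem_nhds h]
    rintro z ⟨x, hx⟩
    exact ⟨x, _root_.funext fun t => congrFun (congrFun hx t.1) t.2⟩
  exact hsurj.denseRange.comp hdense he

end PolynomialMaps

section MaskProducts

variable {ι : Type*} [Fintype ι]

/-- The matrix product `X * Y * Z` after erasing the entries of `X`, `Y` and `Z` outside `P₁`,
`P₂` and `P₃`. -/
noncomputable def maskMul {R : Type*} [Semiring R] (P₁ P₂ P₃ : ι → ι → Prop)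
    (X : Matrix ι ι R × Matrix ι ι R × Matrix ι ι R) : Matrix ι ι R :=
  mask P₁ X.1 * mask P₂ X.2.1 * mask P₃ X.2.2

theorem exists_map_eval_eq_maskMul (P₁ P₂ P₃ : ι → ι → Prop) :
    ∃ Q : Matrix ι ι (MvPolynomial (Fin 3 × ι × ι) ℂ),
      Set.range (fun x => Q.map (MvPolynomial.eval x)) = Set.range (maskMul P₁ P₂ P₃) := by
  let T (k : Fin 3) : Matrix ι ι (MvPolynomial (Fin 3 × ι × ι) ℂ) :=
    of fun i j => MvPolynomial.X (k, i, j)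
  let m (x : Fin 3 × ι × ι → ℂ) (k : Fin 3) : Matrix ι ι ℂ := of fun i j => x (k, i, j)
  have hT (x k) : (T k).map (MvPolynomial.eval x) = m x k := by ext; simp [T, m]
  have hQ (x) : (maskMul P₁ P₂ P₃ (T 0, T 1, T 2)).map (MvPolynomial.eval x) =
      maskMul P₁ P₂ P₃ (m x 0, m x 1, m x 2) := by
    simp only [maskMul, Matrix.map_mul, map_mask, hT]
  refine ⟨maskMul P₁ P₂ P₃ (T 0, T 1, T 2), Set.Subset.antisymm ?_ ?_⟩
  · rintro _ ⟨x, rfl⟩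
    exact ⟨_, (hQ x).symm⟩
  · rintro _ ⟨X, rfl⟩
    exact ⟨fun s => ![X.1, X.2.1, X.2.2] s.1 s.2.1 s.2.2, hQ _⟩

theorem exists_forall_eq_trace_mul {κ K : Type*} [Fintype κ] [CommSemiring K]
    (φ : Matrix ι κ K →ₗ[K] K) : ∃ ξ : Matrix κ ι K, ∀ X, φ X = (ξ * X).trace := by
  classical
  refine ⟨of fun j i => φ (single i j 1), fun X => ?_⟩
  suffices φ = traceLinearMap κ K K ∘ₗ mulLeftLinearMap κ K (of fun j i => φ (single i j 1)) from
    LinearMap.congr_fun this X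
  refine ext_linearMap _ fun i j => LinearMap.ext_ring ?_
  simp [trace_mul_single]

theorem surjective_of_trace_mul_eq_zero {κ K : Type*} [Fintype κ] [Field K]
    {E : Type*} [AddCommGroup E] [Module K E] (L : E →ₗ[K] Matrix ι κ K)
    (h : ∀ ξ : Matrix κ ι K, (∀ x, (ξ * L x).trace = 0) → ξ = 0) : Function.Surjective L := by
  rw [← LinearMap.range_eq_top]
  by_contra hne
  obtain ⟨φ, hφ, hle⟩ := Submodule.exists_le_ker_of_lt_top _ (lt_top_iff_ne_top.2 hne)
  obtain ⟨ξ, hξ⟩ := exists_forall_eq_trace_mul φ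
  have hξ0 : ξ = 0 := h ξ fun x => (hξ _).symm.trans (hle ⟨x, rfl⟩)
  exact hφ (LinearMap.ext fun X => by simp [hξ, hξ0])

variable {P₁ P₂ P₃ : ι → ι → Prop}

attribute [local instance] Matrix.linftyOpNormedRing Matrix.linftyOpNormedAlgebra

variable [DecidableEq ι] in
theorem hasStrictFDerivAt_maskMul {χ : Matrix ι ι ℂ} (hχ : SupportedOn P₂ χ) (h₁ : ∀ i, P₁ i i)
    (h₃ : ∀ i, P₃ i i) :
    ∃ L : Matrix ι ι ℂ × Matrix ι ι ℂ × Matrix ι ι ℂ →L[ℂ] Matrix ι ι ℂ,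
      HasStrictFDerivAt (maskMul P₁ P₂ P₃) L (1, χ, 1) ∧
      ∀ X, L X = mask P₁ X.1 * χ + mask P₂ X.2.1 + χ * mask P₃ X.2.2 := by
  let E := Matrix ι ι ℂ × Matrix ι ι ℂ × Matrix ι ι ℂ
  let L₁ : E →L[ℂ] Matrix ι ι ℂ := (mask P₁).toContinuousLinearMap.comp (.fst ℂ _ _)
  let L₂ : E →L[ℂ] Matrix ι ι ℂ :=
    (mask P₂).toContinuousLinearMap.comp ((ContinuousLinearMap.fst ℂ _ _).comp (.snd ℂ _ _))
  let L₃ : E →L[ℂ] Matrix ι ι ℂ :=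
    (mask P₃).toContinuousLinearMap.comp ((ContinuousLinearMap.snd ℂ _ _).comp (.snd ℂ _ _))
  refine ⟨_, (L₁.hasStrictFDerivAt.mul' L₂.hasStrictFDerivAt).mul' L₃.hasStrictFDerivAt,
    fun X => ?_⟩
  change mask P₁ 1 * mask P₂ χ * mask P₃ X.2.2 +
    (mask P₁ 1 * mask P₂ X.2.1 + mask P₁ X.1 * mask P₂ χ) * mask P₃ 1 = _
  rw [(supportedOn_one h₁).mask_eq, (supportedOn_one h₃).mask_eq, hχ.mask_eq]
  simp only [one_mul, mul_one]
  abel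

theorem range_maskMul_mem_nhds {χ : Matrix ι ι ℂ} (hχ : SupportedOn P₂ χ) (h₁ : ∀ i, P₁ i i)
    (h₃ : ∀ i, P₃ i i)
    (hsurj : ∀ ξ : Matrix ι ι ℂ, SupportedOn (fun j i => ¬ P₂ i j) ξ →
      SupportedOn (fun j i => ¬ P₁ i j) (χ * ξ) → SupportedOn (fun j i => ¬ P₃ i j) (ξ * χ) →
      ξ = 0) :
    Set.range (maskMul P₁ P₂ P₃) ∈ nhds χ := by
  classical
  obtain ⟨L, hL, hLX⟩ := hasStrictFDerivAt_maskMul hχ h₁ h₃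
  have hL_surj : Function.Surjective L.toLinearMap := by
    refine surjective_of_trace_mul_eq_zero _ fun ξ hξ => hsurj ξ ?_ ?_ ?_
    · intro j i hji hij
      have hξX := hξ (0, single i j 1, 0)
      simp only [ContinuousLinearMap.coe_coe, hLX, map_zero, zero_mul, mul_zero, zero_add, add_zero,
        (supportedOn_single hij _).mask_eq, trace_mul_single, MulOpposite.op_one, one_smul] at hξX
      exact hji hξX
    · intro j i hji hij
      have hξX := hξ (single i j 1, 0, 0)
      simp only [ContinuousLinearMap.coe_coe, hLX, map_zero, mul_zero, add_zero,
        (supportedOn_single hij _).mask_eq] at hξX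
      rw [← mul_assoc, trace_mul_cycle, trace_mul_single, MulOpposite.op_one, one_smul] at hξX
      exact hji hξX
    · intro j i hji hij
      have hξX := hξ (0, 0, single i j 1)
      simp only [ContinuousLinearMap.coe_coe, hLX, map_zero, zero_mul, zero_add, ← mul_assoc,
        (supportedOn_single hij _).mask_eq, trace_mul_single, MulOpposite.op_one, one_smul] at hξX
      exact hji hξX
  have hmap := hL.map_nhds_eq_of_surj (LinearMap.range_eq_top.2 hL_surj)
  have hχ' : maskMul P₁ P₂ P₃ (1, χ, 1) = χ := by
    rw [maskMul, (supportedOn_one h₁).mask_eq, (supportedOn_one h₃).mask_eq, hχ.mask_eq, one_mul,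
      mul_one]
  rw [hχ'] at hmap
  exact hmap ▸ Filter.range_mem_map

theorem denseRange_maskMul {χ : Matrix ι ι ℂ} (hχ : SupportedOn P₂ χ) (h₁ : ∀ i, P₁ i i)
    (h₃ : ∀ i, P₃ i i)
    (hsurj : ∀ ξ : Matrix ι ι ℂ, SupportedOn (fun j i => ¬ P₂ i j) ξ →
      SupportedOn (fun j i => ¬ P₁ i j) (χ * ξ) → SupportedOn (fun j i => ¬ P₃ i j) (ξ * χ) →
      ξ = 0) :
    DenseRange (maskMul (R := ℂ) P₁ P₂ P₃) := by
  obtain ⟨Q, hQ⟩ := exists_map_eval_eq_maskMul P₁ P₂ P₃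
  have hdense :=
    denseRange_map_eval_of_range_mem_nhds Q χ (hQ ▸ range_maskMul_mem_nhds hχ h₁ h₃ hsurj)
  rwa [DenseRange, hQ] at hdense

end MaskProducts

section Blocks

variable {ι κ R : Type*}

/-- `X` is block diagonal for the labelling `f`: its nonzero entries join indices carrying the same
label. -/
abbrev BlockSupported [Zero R] (f : ι → κ) (X : Matrix ι ι R) : Prop :=
  SupportedOn (fun i j => f i = f j) X

theorem BlockSupported.mul [Fintype ι] [NonUnitalNonAssocSemiring R] {f : ι → κ}
    {X Y : Matrix ι ι R} (hX : BlockSupported f X) (hY : BlockSupported f Y) :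
    BlockSupported f (X * Y) :=
  SupportedOn.mul hX hY fun _ _ _ => Eq.trans

theorem BlockSupported.star [AddMonoid R] [StarAddMonoid R] {f : ι → κ} {X : Matrix ι ι R}
    (hX : BlockSupported f X) : BlockSupported f (star X) :=
  (SupportedOn.conjTranspose hX).mono fun _ _ => Eq.symm

/-- The block diagonal part of `X` for the labelling `f`. -/
noncomputable abbrev blockPart [Semiring R] (f : ι → κ) : Matrix ι ι R →ₗ[R] Matrix ι ι R :=
  mask fun i j => f i = f j

theorem blockPart_star [Semiring R] [StarRing R] (f : ι → κ) (X : Matrix ι ι R) :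
    blockPart f (star X) = star (blockPart f X) := by
  ext i j
  by_cases h : f i = f j
  · simp [mask_apply, star_apply, h]
  · simp [mask_apply, star_apply, h, Ne.symm h]

variable [Fintype ι]

theorem blockPart_mul_left [Semiring R] {f : ι → κ} {X : Matrix ι ι R} (hX : BlockSupported f X)
    (Y : Matrix ι ι R) : blockPart f (X * Y) = X * blockPart f Y := by
  classical
  ext i j
  have hterm (k : ι) : X i k * blockPart f Y k j = if f i = f j then X i k * Y k j else 0 := by
    by_cases h : X i k = 0
    · simp [h]
    · rw [mask_apply, hX i k h, mul_ite, mul_zero]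
  rw [mul_apply, Finset.sum_congr rfl fun k _ => hterm k, Finset.sum_ite_irrel,
    Finset.sum_const_zero, mask_apply, mul_apply]

theorem blockPart_mul_right [Semiring R] {f : ι → κ} (X : Matrix ι ι R) {Y : Matrix ι ι R}
    (hY : BlockSupported f Y) : blockPart f (X * Y) = blockPart f X * Y := by
  classical
  ext i j
  have hterm (k : ι) : blockPart f X i k * Y k j = if f i = f j then X i k * Y k j else 0 := by
    by_cases h : Y k j = 0
    · simp [h]
    · rw [mask_apply, ← hY k j h, ite_mul, zero_mul]
  rw [mul_apply, Finset.sum_congr rfl fun k _ => hterm k, Finset.sum_ite_irrel,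
    Finset.sum_const_zero, mask_apply, mul_apply]

theorem trace_blockPart [Semiring R] (f : ι → κ) (X : Matrix ι ι R) :
    (blockPart f X).trace = X.trace :=
  Finset.sum_congr rfl fun _ _ => if_pos rfl

theorem trace_mul_blockPart [Semiring R] {f : ι → κ} {X : Matrix ι ι R}
    (hX : BlockSupported f X) (Y : Matrix ι ι R) :
    (X * blockPart f Y).trace = (X * Y).trace := by
  rw [← blockPart_mul_left hX, trace_blockPart]

variable [DecidableEq ι]

theorem supportedOn_iff_semiconjBy_diagonal [CommRing R] [IsDomain R] {f g : ι → R}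
    {X : Matrix ι ι R} :
    SupportedOn (fun i j => g i = f j) X ↔ SemiconjBy X (diagonal f) (diagonal g) := by
  simp only [SemiconjBy, ← Matrix.ext_iff, mul_diagonal, diagonal_mul, mul_comm (g _), SupportedOn]
  refine forall₂_congr fun i j => ?_
  rw [mul_eq_mul_left_iff]
  tauto

theorem blockSupported_iff_forall_commute [CommRing R] [IsDomain R] {f : ι → κ}
    {X : Matrix ι ι R} :
    BlockSupported f X ↔ ∀ g : κ → R, Commute X (diagonal (g ∘ f)) := by
  classical
  refine ⟨fun hX g => supportedOn_iff_semiconjBy_diagonal.1 (hX.mono fun _ _ => congrArg g),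
    fun hX i j hij => ?_⟩
  have := supportedOn_iff_semiconjBy_diagonal.2 (hX (Pi.single (f i) 1)) i j hij
  by_contra h
  simp [Ne.symm h] at this

end Blocks

section Conjugation

/-- `x` and `y` anticommute. -/
abbrev AntiCommute {A : Type*} [Mul A] [Neg A] (x y : A) : Prop :=
  SemiconjBy x y (-y)

theorem AntiCommute.sub {A : Type*} [NonUnitalNonAssocRing A] {x y z : A} (hy : AntiCommute x y)
    (hz : AntiCommute x z) : AntiCommute x (y - z) := by
  rw [AntiCommute, neg_sub']
  exact hy.sub_right hz

theorem AntiCommute.commute_lie {A : Type*} [Ring A] {x y z : A} (hy : AntiCommute x y)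
    (hz : AntiCommute x z) : Commute x ⁅y, z⁆ := by
  have h := (hy.mul_right hz).sub_right (hz.mul_right hy)
  rwa [neg_mul_neg, neg_mul_neg] at h

theorem AntiCommute.map {A B F : Type*} [NonUnitalNonAssocRing A] [NonUnitalNonAssocRing B]
    [FunLike F A B] [NonUnitalRingHomClass F A B] {x y : A} (h : AntiCommute x y) (φ : F) :
    AntiCommute (φ x) (φ y) := by
  rw [AntiCommute, ← map_neg]
  exact SemiconjBy.map h φ

theorem AntiCommute.submatrix {ι ρ R : Type*} [Fintype ι] [Fintype ρ] [NonUnitalNonAssocRing R]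
    {X Y : Matrix ι ι R} (h : AntiCommute X Y) (e : ρ ≃ ι) :
    AntiCommute (X.submatrix e e) (Y.submatrix e e) := by
  change X.submatrix e e * Y.submatrix e e = (-Y).submatrix e e * X.submatrix e e
  rw [submatrix_mul_equiv, submatrix_mul_equiv, h.eq]

variable {ι κ : Type*} [DecidableEq ι]

/-- The complex diagonal matrix with real diagonal entries `d`. -/
abbrev realDiagonal (d : ι → ℝ) : Matrix ι ι ℂ :=
  diagonal fun i => (d i : ℂ)

variable [Fintype ι]

theorem commute_realDiagonal_iff {d : ι → ℝ} {X : Matrix ι ι ℂ} :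
    Commute X (realDiagonal d) ↔ BlockSupported d X := by
  rw [Commute, ← supportedOn_iff_semiconjBy_diagonal]
  simp only [Complex.ofReal_inj]

theorem antiCommute_realDiagonal_iff {d : ι → ℝ} {X : Matrix ι ι ℂ} :
    AntiCommute X (realDiagonal d) ↔ SupportedOn (fun i j => -d i = d j) X := by
  rw [AntiCommute, realDiagonal, diagonal_neg, ← supportedOn_iff_semiconjBy_diagonal]
  simp only [← Complex.ofReal_neg, Complex.ofReal_inj]

/-- Conjugation `X ↦ u * X * star u` by a unitary matrix. -/
noncomputable abbrev conjBy (u : unitary (Matrix ι ι ℂ)) : Matrix ι ι ℂ ≃⋆ₐ[ℂ] Matrix ι ι ℂ :=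
  Unitary.conjStarAlgAut ℂ _ u

theorem conjBy_eq_self {u : unitary (Matrix ι ι ℂ)} {X : Matrix ι ι ℂ}
    (h : Commute (u : Matrix ι ι ℂ) X) : conjBy u X = X := by
  rw [Unitary.conjStarAlgAut_apply, h.eq, mul_assoc, Unitary.mul_star_self_of_mem u.2, mul_one]

theorem conjBy_star_conjBy (u : unitary (Matrix ι ι ℂ)) (X : Matrix ι ι ℂ) :
    conjBy (star u) (conjBy u X) = X := by
  rw [← Unitary.conjStarAlgAut_mul_apply, Unitary.star_mul_self, map_one, StarAlgEquiv.one_apply]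

theorem conjBy_conjBy_star (u : unitary (Matrix ι ι ℂ)) (X : Matrix ι ι ℂ) :
    conjBy u (conjBy (star u) X) = X := by
  rw [← Unitary.conjStarAlgAut_mul_apply, Unitary.mul_star_self, map_one, StarAlgEquiv.one_apply]

theorem conjBy_lie (u : unitary (Matrix ι ι ℂ)) (X Y : Matrix ι ι ℂ) :
    conjBy u ⁅X, Y⁆ = ⁅conjBy u X, conjBy u Y⁆ := by
  rw [Ring.lie_def, Ring.lie_def, map_sub, map_mul, map_mul]

theorem trace_conjBy (u : unitary (Matrix ι ι ℂ)) (X : Matrix ι ι ℂ) :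
    (conjBy u X).trace = X.trace := by
  rw [Unitary.conjStarAlgAut_apply, trace_mul_comm, ← mul_assoc,
    Unitary.star_mul_self_of_mem u.2, one_mul]

theorem BlockSupported.map_conjBy {f : ι → κ} {u : unitary (Matrix ι ι ℂ)} {X : Matrix ι ι ℂ}
    (hX : BlockSupported f X) (hu : BlockSupported f (u : Matrix ι ι ℂ)) :
    BlockSupported f (conjBy u X) := by
  rw [Unitary.conjStarAlgAut_apply]
  exact (hu.mul hX).mul hu.star

theorem BlockSupported.of_conjBy {f : ι → κ} {u : unitary (Matrix ι ι ℂ)} {X : Matrix ι ι ℂ}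
    (hX : BlockSupported f (conjBy u X)) (hu : BlockSupported f (u : Matrix ι ι ℂ)) :
    BlockSupported f X := by
  have h := BlockSupported.map_conjBy (u := Star.star u) hX hu.star
  rwa [conjBy_star_conjBy] at h

theorem isSelfAdjoint_conjBy_iff {u : unitary (Matrix ι ι ℂ)} {X : Matrix ι ι ℂ} :
    IsSelfAdjoint (conjBy u X) ↔ IsSelfAdjoint X := by
  rw [IsSelfAdjoint, ← map_star, EmbeddingLike.apply_eq_iff_eq, IsSelfAdjoint]

theorem blockPart_conjBy {f : ι → κ} {u : unitary (Matrix ι ι ℂ)}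
    (hu : BlockSupported f (u : Matrix ι ι ℂ)) (X : Matrix ι ι ℂ) :
    blockPart f (conjBy u X) = conjBy u (blockPart f X) := by
  simp only [Unitary.conjStarAlgAut_apply, blockPart_mul_right _ hu.star, blockPart_mul_left hu]

end Conjugation

section SpectralTheorem

theorem exists_blockDiagonal'_eq_mul_realDiagonal_mul {o : Type*} {n : o → Type*} [Fintype o]
    [DecidableEq o] [∀ l, Fintype (n l)] [∀ l, DecidableEq (n l)]
    {X : ∀ l, Matrix (n l) (n l) ℂ} (hX : ∀ l, (X l).IsHermitian) :
    ∃ (U : Matrix (Σ l, n l) (Σ l, n l) ℂ) (x : (Σ l, n l) → ℝ), U * Uᴴ = 1 ∧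
      BlockSupported Sigma.fst U ∧ blockDiagonal' X = U * realDiagonal x * Uᴴ := by
  let u (l : o) : Matrix (n l) (n l) ℂ := (hX l).eigenvectorUnitary
  refine ⟨blockDiagonal' u, fun s => (hX s.1).eigenvalues s.2, ?_, ?_, ?_⟩
  · rw [blockDiagonal'_conjTranspose, ← blockDiagonal'_mul, ← blockDiagonal'_one]
    exact congrArg _ (funext fun l => Unitary.mul_star_self_of_mem (hX l).eigenvectorUnitary.2)
  · rintro ⟨l, i⟩ ⟨l', j⟩ h
    by_contra hne
    exact h (blockDiagonal'_apply_ne u i j hne)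
  · have hdiag : realDiagonal (fun s : Σ l, n l => (hX s.1).eigenvalues s.2) =
        blockDiagonal' fun l => realDiagonal (hX l).eigenvalues := by
      rw [blockDiagonal'_diagonal]
    rw [hdiag, blockDiagonal'_conjTranspose, ← blockDiagonal'_mul,
      ← blockDiagonal'_mul]
    exact congrArg _ (funext fun l => (hX l).spectral_theorem)

variable {ι κ : Type*} [Fintype ι] [DecidableEq ι]

theorem exists_eq_conjBy_realDiagonal {f : ι → κ} {X : Matrix ι ι ℂ} (hX : IsSelfAdjoint X)
    (hf : BlockSupported f X) :
    ∃ (u : unitary (Matrix ι ι ℂ)) (x : ι → ℝ), BlockSupported f (u : Matrix ι ι ℂ) ∧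
      X = conjBy u (realDiagonal x) := by
  classical
  let e := Equiv.sigmaFiberEquiv (Set.rangeFactorization f)
  have hXe : X.submatrix e e = blockDiagonal' fun l =>
      X.submatrix (fun i : {i // Set.rangeFactorization f i = l} => (i : ι)) Subtype.val := by
    ext ⟨l, i⟩ ⟨l', j⟩
    by_cases h : l = l'
    · subst h
      rw [blockDiagonal'_apply_eq]
      rfl
    · rw [blockDiagonal'_apply_ne _ _ _ h]
      by_contra h0
      exact h (i.2.symm.trans ((Subtype.ext (hf i j h0)).trans j.2))
  obtain ⟨U, x, hU, hUf, hUX⟩ := exists_blockDiagonal'_eq_mul_realDiagonal_mul fun l =>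
    hX.isHermitian.submatrix fun i : {i // Set.rangeFactorization f i = l} => (i : ι)
  refine ⟨⟨U.submatrix e.symm e.symm, mem_unitaryGroup_iff.2 ?_⟩, x ∘ e.symm, ?_, ?_⟩
  · rw [star_eq_conjTranspose, conjTranspose_submatrix, submatrix_mul_equiv, hU,
      submatrix_one_equiv]
  · exact fun i j hij => congrArg Subtype.val (hUf (e.symm i) (e.symm j) hij)
  · have := congrArg (fun Z => Z.submatrix e.symm e.symm) (hXe.trans hUX)
    rw [submatrix_submatrix, Equiv.self_comp_symm, submatrix_id_id] at this
    rw [this, Unitary.conjStarAlgAut_apply, ← submatrix_mul_equiv _ _ _ e.symm,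
      ← submatrix_mul_equiv _ _ _ e.symm, submatrix_diagonal_equiv]
    rfl

theorem exists_eq_conjBy_realDiagonal_pair {f : ι → κ} {X Y : Matrix ι ι ℂ}
    (hX : IsSelfAdjoint X) (hY : IsSelfAdjoint Y) (hXf : BlockSupported f X)
    (hYf : BlockSupported f Y) (hXY : Commute X Y) :
    ∃ (u : unitary (Matrix ι ι ℂ)) (x y : ι → ℝ), BlockSupported f (u : Matrix ι ι ℂ) ∧
      X = conjBy u (realDiagonal x) ∧ Y = conjBy u (realDiagonal y) := by
  obtain ⟨v, y, hv, rfl⟩ := exists_eq_conjBy_realDiagonal hY hYf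
  obtain ⟨X, rfl⟩ := EquivLike.surjective (conjBy v) X
  have hX' : BlockSupported (fun i => (f i, y i)) X := fun i j hij =>
    Prod.ext (hXf.of_conjBy hv i j hij)
      (commute_realDiagonal_iff.1 (hXY.of_map (EquivLike.injective (conjBy v))) i j hij)
  obtain ⟨w, x, hw, rfl⟩ := exists_eq_conjBy_realDiagonal (isSelfAdjoint_conjBy_iff.1 hX) hX'
  refine ⟨v * w, x, y, hv.mul (hw.mono fun i j => congrArg Prod.fst), ?_, ?_⟩
  · rw [Unitary.conjStarAlgAut_mul_apply]
  · rw [Unitary.conjStarAlgAut_mul_apply, conjBy_eq_self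
      (commute_realDiagonal_iff.2 (hw.mono fun i j => congrArg Prod.snd))]

end SpectralTheorem

section Variation

open NormedSpace

theorem deriv_zero_eq_zero_and_nonneg_of_forall_le {φ ψ : ℝ → ℝ} {b : ℝ}
    (hφ : ∀ x, HasDerivAt φ (ψ x) x) (hψ : HasDerivAt ψ b 0) (hmin : ∀ x, φ 0 ≤ φ x) :
    ψ 0 = 0 ∧ 0 ≤ b := by
  have h0 : ψ 0 = 0 := IsLocalMin.hasDerivAt_eq_zero (Filter.Eventually.of_forall hmin) (hφ 0)
  refine ⟨h0, ?_⟩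
  by_contra! hb
  have hderiv : deriv φ = ψ := funext fun x => (hφ x).deriv
  have hmax : IsLocalMax φ 0 := by
    refine isLocalMax_of_deriv_deriv_neg ?_ (by rw [hderiv, h0]) (hφ 0).continuousAt
    rwa [hderiv, hψ.deriv]
  have hconst : φ =ᶠ[nhds 0] fun _ => φ 0 := hmax.mono fun x hx => le_antisymm hx (hmin x)
  have hψ0 : ψ =ᶠ[nhds 0] fun _ => 0 := by
    simpa only [hderiv, deriv_const'] using hconst.deriv
  rw [← hψ.deriv, hψ0.deriv_eq, deriv_const] at hb
  exact hb.false

variable {𝔸 : Type*} [NormedRing 𝔸] [NormedAlgebra ℝ 𝔸] [CompleteSpace 𝔸]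

theorem hasDerivAt_conj_exp_smul (K M : 𝔸) (x : ℝ) :
    HasDerivAt (fun y : ℝ => exp (y • K) * M * exp (-(y • K)))
      (exp (x • K) * ⁅K, M⁆ * exp (-(x • K))) x := by
  have hneg : HasDerivAt (fun y : ℝ => exp (-(y • K))) (-K * exp (-(x • K))) x := by
    simpa only [smul_neg] using hasDerivAt_exp_smul_const' (-K) x
  refine (((hasDerivAt_exp_smul_const K x).mul_const M).mul hneg).congr_deriv ?_
  rw [Ring.lie_def]
  noncomm_ring

theorem conj_exp_smul_variation (τ : 𝔸 →L[ℝ] ℝ) (hτ : ∀ X Y, τ (X * Y) = τ (Y * X))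
    (π : 𝔸 →L[ℝ] 𝔸) {A M K H : 𝔸}
    (hmin : ∀ x : ℝ, τ ((A - π M) * (A - π M)) ≤
      τ ((exp (x • H) * A * exp (-(x • H)) - π (exp (x • K) * M * exp (-(x • K)))) *
        (exp (x • H) * A * exp (-(x • H)) - π (exp (x • K) * M * exp (-(x • K)))))) :
    τ ((A - π M) * (⁅H, A⁆ - π ⁅K, M⁆)) = 0 ∧
      (⁅H, A⁆ = π ⁅K, M⁆ → 0 ≤ τ ((A - π M) * (⁅H, ⁅H, A⁆⁆ - π ⁅K, ⁅K, M⁆⁆))) := by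
  let E (A M : 𝔸) (x : ℝ) : 𝔸 :=
    exp (x • H) * A * exp (-(x • H)) - π (exp (x • K) * M * exp (-(x • K)))
  have hE (A M : 𝔸) (x : ℝ) : HasDerivAt (E A M) (E ⁅H, A⁆ ⁅K, M⁆ x) x :=
    (hasDerivAt_conj_exp_smul H A x).sub
      (π.hasFDerivAt.comp_hasDerivAt x (hasDerivAt_conj_exp_smul K M x))
  have hE0 (A M : 𝔸) : E A M 0 = A - π M := by
    simp only [E, zero_smul, neg_zero, exp_zero, one_mul, mul_one]
  have hφ (x : ℝ) : HasDerivAt (fun x => τ (E A M x * E A M x))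
      (2 * τ (E A M x * E ⁅H, A⁆ ⁅K, M⁆ x)) x := by
    refine (τ.hasFDerivAt.comp_hasDerivAt x ((hE A M x).mul (hE A M x))).congr_deriv ?_
    rw [map_add, two_mul]
    exact congrArg₂ (· + ·) (hτ _ _) rfl
  have hψ : HasDerivAt (fun x => 2 * τ (E A M x * E ⁅H, A⁆ ⁅K, M⁆ x)) _ 0 :=
    (τ.hasFDerivAt.comp_hasDerivAt (0 : ℝ) ((hE A M 0).mul (hE _ _ 0))).const_mul 2
  obtain ⟨hfirst, hsecond⟩ := deriv_zero_eq_zero_and_nonneg_of_forall_le hφ hψ fun x => by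
    rw [hE0]
    exact hmin x
  rw [hE0, hE0] at hfirst
  refine ⟨by linarith, fun heq => ?_⟩
  rw [hE0, hE0, hE0, heq, sub_self, zero_mul, zero_add] at hsecond
  rw [heq]
  exact nonneg_of_mul_nonneg_right hsecond two_pos

variable {ι κ : Type*} [Fintype ι] [DecidableEq ι]

theorem BlockSupported.exp_smul {f : ι → κ} {H : Matrix ι ι ℂ} (hH : BlockSupported f H) (x : ℝ) :
    BlockSupported f (exp (x • H)) := by
  rw [blockSupported_iff_forall_commute] at hH ⊢
  exact fun g => ((hH g).symm.smul_right x).exp_right.symm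

end Variation

section Nearest

variable {ι κ : Type*} [Fintype ι]

open scoped ComplexOrder in
theorem commute_of_re_trace_mul_lie_eq_zero {X D : Matrix ι ι ℂ} (hX : IsSelfAdjoint X)
    (hD : IsSelfAdjoint D) (h : (D * ⁅⁅X, D⁆, X⁆).trace.re = 0) : Commute X D := by
  have hstar : star ⁅X, D⁆ = -⁅X, D⁆ := by
    rw [Ring.lie_def, star_sub, star_mul, star_mul, hX.star_eq, hD.star_eq, neg_sub]
  have htrace : (D * ⁅⁅X, D⁆, X⁆).trace = -(star ⁅X, D⁆ * ⁅X, D⁆).trace := by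
    have hcycle : (D * (⁅X, D⁆ * X)).trace = (X * D * ⁅X, D⁆).trace := by
      rw [← mul_assoc, trace_mul_comm, ← mul_assoc]
    rw [hstar, Ring.lie_def _ X, mul_sub, trace_sub, hcycle, ← trace_sub, ← trace_neg,
      Ring.lie_def X]
    congr 1
    noncomm_ring
  have hnonneg := (posSemidef_conjTranspose_mul_self ⁅X, D⁆).trace_nonneg
  rw [htrace, Complex.neg_re, neg_eq_zero] at h
  have hzero := trace_conjTranspose_mul_self_eq_zero_iff.1
    (Complex.ext h (Complex.nonneg_iff.1 hnonneg).2.symm)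
  exact sub_eq_zero.1 hzero

variable [DecidableEq ι]

/-- `J` is a Hermitian involution, thought of as a grading, for which the Hermitian matrices `A` and
`M` are odd; `J` and `A` are block diagonal for the labelling `c`. -/
structure OddPair (c : ι → κ) (J A M : Matrix ι ι ℂ) : Prop where
  isSelfAdjoint_grading : IsSelfAdjoint J
  grading_mul_self : J * J = 1
  blockSupported_grading : BlockSupported c J
  isSelfAdjoint_left : IsSelfAdjoint A
  isSelfAdjoint_right : IsSelfAdjoint M
  antiCommute_left : AntiCommute J A
  antiCommute_right : AntiCommute J M
  blockSupported_left : BlockSupported c A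

/-- No even unitary conjugate of `M` has its block part closer to `A`, in Frobenius norm, than the
block part of `M` itself. -/
structure IsNearest (c : ι → κ) (J A M : Matrix ι ι ℂ) : Prop extends OddPair c J A M where
  le : ∀ k : unitary (Matrix ι ι ℂ), Commute J k →
    ((A - blockPart c M) * (A - blockPart c M)).trace.re ≤
      ((A - blockPart c (conjBy k M)) * (A - blockPart c (conjBy k M))).trace.re

variable {c : ι → κ} {J A M : Matrix ι ι ℂ}

theorem OddPair.isSelfAdjoint_defect (h : OddPair c J A M) : IsSelfAdjoint (A - blockPart c M) := by
  refine h.isSelfAdjoint_left.sub ?_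
  rw [IsSelfAdjoint, ← blockPart_star, h.isSelfAdjoint_right.star_eq]

theorem OddPair.antiCommute_defect (h : OddPair c J A M) :
    AntiCommute J (A - blockPart c M) := by
  refine h.antiCommute_left.sub ?_
  rw [AntiCommute, SemiconjBy, ← map_neg, ← blockPart_mul_left h.blockSupported_grading,
    ← blockPart_mul_right _ h.blockSupported_grading, h.antiCommute_right.eq]

theorem OddPair.blockSupported_defect (h : OddPair c J A M) :
    BlockSupported c (A - blockPart c M) :=
  h.blockSupported_left.sub (supportedOn_mask _ M)

theorem OddPair.map_conjBy (h : OddPair c J A M) {v : unitary (Matrix ι ι ℂ)}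
    (hv : BlockSupported c (v : Matrix ι ι ℂ)) :
    OddPair c (conjBy v J) (conjBy v A) (conjBy v M) where
  isSelfAdjoint_grading := isSelfAdjoint_conjBy_iff.2 h.isSelfAdjoint_grading
  grading_mul_self := by rw [← map_mul, h.grading_mul_self, map_one]
  blockSupported_grading := h.blockSupported_grading.map_conjBy hv
  isSelfAdjoint_left := isSelfAdjoint_conjBy_iff.2 h.isSelfAdjoint_left
  isSelfAdjoint_right := isSelfAdjoint_conjBy_iff.2 h.isSelfAdjoint_right
  antiCommute_left := h.antiCommute_left.map _
  antiCommute_right := h.antiCommute_right.map _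
  blockSupported_left := h.blockSupported_left.map_conjBy hv

theorem trace_conjBy_sub_blockPart_mul_self {v : unitary (Matrix ι ι ℂ)}
    (hv : BlockSupported c (v : Matrix ι ι ℂ)) (A M : Matrix ι ι ℂ) :
    ((conjBy v A - blockPart c (conjBy v M)) *
      (conjBy v A - blockPart c (conjBy v M))).trace =
      ((A - blockPart c M) * (A - blockPart c M)).trace := by
  rw [blockPart_conjBy hv, ← map_sub, ← map_mul, trace_conjBy]

theorem IsNearest.map_conjBy (h : IsNearest c J A M) {v : unitary (Matrix ι ι ℂ)}
    (hv : BlockSupported c (v : Matrix ι ι ℂ)) :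
    IsNearest c (conjBy v J) (conjBy v A) (conjBy v M) where
  toOddPair := h.toOddPair.map_conjBy hv
  le k hk := by
    have hkv : conjBy k (conjBy v M) =
        conjBy v (conjBy (star v * k * v) M) := by
      simp only [← Unitary.conjStarAlgAut_mul_apply, ← mul_assoc, Unitary.mul_star_self, one_mul]
    have hcomm : Commute J (star v * k * v : unitary (Matrix ι ι ℂ)) := by
      have := hk.map (conjBy (star v))
      rwa [← Unitary.conjStarAlgAut_mul_apply, Unitary.star_mul_self, map_one,
        Unitary.conjStarAlgAut_apply, Unitary.coe_star, star_star] at this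
    rw [hkv, trace_conjBy_sub_blockPart_mul_self hv, trace_conjBy_sub_blockPart_mul_self hv]
    exact h.le _ hcomm

theorem IsNearest.le_conjBy (h : IsNearest c J A M) {k v : unitary (Matrix ι ι ℂ)}
    (hk : Commute J (k : Matrix ι ι ℂ)) (hv : Commute J (v : Matrix ι ι ℂ))
    (hvc : BlockSupported c (v : Matrix ι ι ℂ)) :
    ((A - blockPart c M) * (A - blockPart c M)).trace.re ≤
      ((conjBy v A - blockPart c (conjBy k M)) *
        (conjBy v A - blockPart c (conjBy k M))).trace.re := by
  have hvk : conjBy k M = conjBy v (conjBy (star v * k) M) := by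
    rw [← Unitary.conjStarAlgAut_mul_apply, ← mul_assoc, Unitary.mul_star_self, one_mul]
  rw [hvk, trace_conjBy_sub_blockPart_mul_self hvc]
  exact h.le _ ((h.isSelfAdjoint_grading.star_eq ▸ hv.star_star).mul_right hk)

theorem exists_unitary_conjBy_eq_exp_smul {K : Matrix ι ι ℂ} (hK : K ∈ skewAdjoint (Matrix ι ι ℂ))
    (x : ℝ) : ∃ u : unitary (Matrix ι ι ℂ), (u : Matrix ι ι ℂ) = NormedSpace.exp (x • K) ∧
      ∀ X, conjBy u X = NormedSpace.exp (x • K) * X * NormedSpace.exp (-(x • K)) := by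
  have hstar : star (NormedSpace.exp (x • K)) = NormedSpace.exp (-(x • K)) := by
    rw [star_eq_conjTranspose, ← Matrix.exp_conjTranspose, ← star_eq_conjTranspose,
      skewAdjoint.mem_iff.1 (skewAdjoint.smul_mem x hK)]
  refine ⟨⟨_, mem_unitaryGroup_iff.2 ?_⟩, rfl,
    fun X => congrArg (NormedSpace.exp (x • K) * X * ·) hstar⟩
  rw [hstar, ← Matrix.exp_add_of_commute _ _ (Commute.refl (x • K)).neg_right, add_neg_cancel,
    NormedSpace.exp_zero]

theorem IsNearest.variation (h : IsNearest c J A M) {K H : Matrix ι ι ℂ}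
    (hK : K ∈ skewAdjoint (Matrix ι ι ℂ)) (hJK : Commute J K)
    (hH : H ∈ skewAdjoint (Matrix ι ι ℂ)) (hJH : Commute J H) (hHc : BlockSupported c H) :
    ((A - blockPart c M) * (⁅H, A⁆ - ⁅K, M⁆)).trace.re = 0 ∧
      (⁅H, A⁆ = blockPart c ⁅K, M⁆ →
        0 ≤ ((A - blockPart c M) * (⁅H, ⁅H, A⁆⁆ - ⁅K, ⁅K, M⁆⁆)).trace.re) := by
  let := Matrix.linftyOpNormedRing (n := ι) (α := ℂ)
  let := Matrix.linftyOpNormedAlgebra (R := ℝ) (n := ι) (α := ℂ)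
  let τ : Matrix ι ι ℂ →L[ℝ] ℝ :=
    (Complex.reLm.comp ((traceLinearMap ι ℂ ℂ).restrictScalars ℝ)).toContinuousLinearMap
  let π : Matrix ι ι ℂ →L[ℝ] Matrix ι ι ℂ :=
    ((blockPart c).restrictScalars ℝ).toContinuousLinearMap
  have key := conj_exp_smul_variation τ
    (fun X Y => congrArg Complex.re (trace_mul_comm X Y)) π (A := A) (M := M) (K := K) (H := H)
    fun x => by
      obtain ⟨k, hk, hkX⟩ := exists_unitary_conjBy_eq_exp_smul hK x
      obtain ⟨v, hv, hvX⟩ := exists_unitary_conjBy_eq_exp_smul hH x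
      have hJk : Commute J (k : Matrix ι ι ℂ) := hk ▸ (hJK.smul_right x).exp_right
      have hJv : Commute J (v : Matrix ι ι ℂ) := hv ▸ (hJH.smul_right x).exp_right
      have := h.le_conjBy hJk hJv (hv ▸ hHc.exp_smul x)
      rwa [hkX, hvX] at this
  have htrace (X Y : Matrix ι ι ℂ) : τ ((A - π M) * (X - π Y)) =
      ((A - blockPart c M) * (X - Y)).trace.re := by
    rw [mul_sub, mul_sub, trace_sub, ← trace_mul_blockPart h.blockSupported_defect Y, ← trace_sub]
    rfl
  exact ⟨(htrace _ _).symm.trans key.1, fun heq => (key.2 heq).trans_eq (htrace _ _)⟩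

theorem IsNearest.commute_defect (h : IsNearest c J A M) :
    Commute M (A - blockPart c M) ∧ Commute A (A - blockPart c M) := by
  have hD := h.isSelfAdjoint_defect
  have hskew {X : Matrix ι ι ℂ} (hX : IsSelfAdjoint X) :
      ⁅X, A - blockPart c M⁆ ∈ skewAdjoint (Matrix ι ι ℂ) := by
    rw [skewAdjoint.mem_iff, Ring.lie_def, star_sub, star_mul, star_mul, hX.star_eq, hD.star_eq,
      neg_sub]
  have hzero (X : Matrix ι ι ℂ) : ⁅(0 : Matrix ι ι ℂ), X⁆ = 0 := by
    rw [Ring.lie_def, zero_mul, mul_zero, sub_self]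
  refine ⟨commute_of_re_trace_mul_lie_eq_zero h.isSelfAdjoint_right hD ?_,
    commute_of_re_trace_mul_lie_eq_zero h.isSelfAdjoint_left hD ?_⟩
  · have := (h.variation (hskew h.isSelfAdjoint_right)
      (h.antiCommute_right.commute_lie h.antiCommute_defect) (zero_mem _) (Commute.zero_right J)
      (SupportedOn.zero _)).1
    rwa [hzero, zero_sub, mul_neg, trace_neg, Complex.neg_re, neg_eq_zero] at this
  · have := (h.variation (zero_mem _) (Commute.zero_right J) (hskew h.isSelfAdjoint_left)
      (h.antiCommute_left.commute_lie h.antiCommute_defect)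
      ((h.blockSupported_left.mul h.blockSupported_defect).sub
        (h.blockSupported_defect.mul h.blockSupported_left))).1
    rwa [hzero, sub_zero] at this

end Nearest

section AdjointInverse

variable {ι : Type*}

/-- The solution `K` of `⁅K, realDiagonal m⁆ = θ`, for `θ` vanishing wherever `m i = m j`. -/
noncomputable def adInv (m : ι → ℝ) (θ : Matrix ι ι ℂ) : Matrix ι ι ℂ :=
  of fun i j => θ i j / ((m j : ℂ) - m i)

theorem star_adInv (m : ι → ℝ) (θ : Matrix ι ι ℂ) : star (adInv m θ) = -adInv m (star θ) := by
  ext i j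
  simp [adInv, star_apply, ← div_neg]

theorem SupportedOn.adInv {P : ι → ι → Prop} {θ : Matrix ι ι ℂ} (hθ : SupportedOn P θ)
    (m : ι → ℝ) : SupportedOn P (adInv m θ) :=
  fun i j hij => hθ i j fun h => hij (by simp [_root_.adInv, h])

variable [Fintype ι] [DecidableEq ι]

theorem lie_realDiagonal_right_apply (K : Matrix ι ι ℂ) (m : ι → ℝ) (i j : ι) :
    ⁅K, realDiagonal m⁆ i j = ((m j : ℂ) - m i) * K i j := by
  rw [Ring.lie_def, Matrix.sub_apply, mul_diagonal, diagonal_mul]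
  ring

theorem lie_adInv_realDiagonal {m : ι → ℝ} {θ : Matrix ι ι ℂ}
    (hθ : SupportedOn (fun i j => m i ≠ m j) θ) : ⁅adInv m θ, realDiagonal m⁆ = θ := by
  ext i j
  rw [lie_realDiagonal_right_apply, adInv, of_apply]
  by_cases h : θ i j = 0
  · rw [h, zero_div, mul_zero]
  · exact mul_div_cancel₀ _ (sub_ne_zero.2 (Complex.ofReal_injective.ne (hθ i j h).symm))

theorem AntiCommute.commute_adInv {m : ι → ℝ} {J θ : Matrix ι ι ℂ}
    (hm : AntiCommute J (realDiagonal m)) (hθ : AntiCommute J θ) : Commute J (adInv m θ) := by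
  rw [antiCommute_realDiagonal_iff] at hm
  have hleft (i j : ι) : (J * adInv m θ) i j = (J * θ) i j / ((m j : ℂ) + m i) := by
    rw [mul_apply, mul_apply, Finset.sum_div]
    refine Finset.sum_congr rfl fun k _ => ?_
    by_cases h : J i k = 0
    · simp [h]
    · rw [adInv, of_apply, ← hm i k h, Complex.ofReal_neg, sub_neg_eq_add, mul_div_assoc]
  have hright (i j : ι) : (adInv m θ * J) i j = (-(θ * J)) i j / ((m j : ℂ) + m i) := by
    rw [neg_apply, mul_apply, mul_apply, neg_div, ← div_neg, Finset.sum_div]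
    refine Finset.sum_congr rfl fun k _ => ?_
    by_cases h : J k j = 0
    · simp [h]
    · rw [adInv, of_apply, ← hm k j h, Complex.ofReal_neg, div_mul_eq_mul_div]
      congr 1
      ring
  ext i j
  rw [hleft, hright, ← neg_mul, hθ.eq]

theorem trace_realDiagonal_mul_lie_adInv {θ : Matrix ι ι ℂ} (hθ : IsSelfAdjoint θ) (d m : ι → ℝ) :
    (realDiagonal d * ⁅adInv m θ, θ⁆).trace.re =
      ∑ i, ∑ j, (d i - d j) / (m j - m i) * Complex.normSq (θ i j) := by
  have hcycle : (realDiagonal d * ⁅adInv m θ, θ⁆).trace =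
      -(⁅adInv m θ, realDiagonal d⁆ * θ).trace := by
    rw [Ring.lie_def, Ring.lie_def, mul_sub, sub_mul, trace_sub, trace_sub, neg_sub,
      ← mul_assoc, ← mul_assoc, trace_mul_comm _ (adInv m θ), mul_assoc (adInv m θ),
      ← mul_assoc, mul_assoc]
  have hentry (i j : ι) : ⁅adInv m θ, realDiagonal d⁆ i j * θ j i =
      -(((d i - d j) / (m j - m i) * Complex.normSq (θ i j) : ℝ) : ℂ) := by
    rw [lie_realDiagonal_right_apply, adInv, of_apply, ← hθ.isHermitian.apply j i,
      Complex.star_def]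
    push_cast [Complex.normSq_eq_conj_mul_self]
    ring
  rw [hcycle, trace, ← Finset.sum_neg_distrib, Complex.re_sum]
  refine Finset.sum_congr rfl fun i _ => ?_
  rw [diag_apply, mul_apply, ← Finset.sum_neg_distrib, Complex.re_sum]
  exact Finset.sum_congr rfl fun j _ => by rw [hentry, neg_neg, Complex.ofReal_re]

theorem trace_realDiagonal_mul_lie_adInv_nonpos {θ : Matrix ι ι ℂ} (hθ : IsSelfAdjoint θ)
    {d m : ι → ℝ} (h : SupportedOn (fun i j => (d i - d j) * (m j - m i) ≤ 0) θ) :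
    (realDiagonal d * ⁅adInv m θ, θ⁆).trace.re ≤ 0 := by
  rw [trace_realDiagonal_mul_lie_adInv hθ]
  refine Finset.sum_nonpos fun i _ => Finset.sum_nonpos fun j _ => ?_
  by_cases hij : θ i j = 0
  · rw [hij, Complex.normSq_zero, mul_zero]
  · exact mul_nonpos_of_nonpos_of_nonneg (div_nonpos_iff.2 (mul_nonpos_iff.1 (h i j hij)))
      (Complex.normSq_nonneg _)

theorem trace_realDiagonal_mul_lie_adInv_pos {θ : Matrix ι ι ℂ} (hθ : IsSelfAdjoint θ)
    {d m : ι → ℝ} (h : SupportedOn (fun i j => 0 < (d i - d j) * (m j - m i)) θ) (hne : θ ≠ 0) :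
    0 < (realDiagonal d * ⁅adInv m θ, θ⁆).trace.re := by
  have hpos (i j : ι) (hij : θ i j ≠ 0) :
      0 < (d i - d j) / (m j - m i) * Complex.normSq (θ i j) :=
    mul_pos (div_pos_iff.2 (mul_pos_iff.1 (h i j hij))) (Complex.normSq_pos.2 hij)
  have hnonneg (i j : ι) : 0 ≤ (d i - d j) / (m j - m i) * Complex.normSq (θ i j) := by
    by_cases hij : θ i j = 0
    · rw [hij, Complex.normSq_zero, mul_zero]
    · exact (hpos i j hij).le
  obtain ⟨i, j, hij⟩ : ∃ i j, θ i j ≠ 0 := by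
    by_contra! h0
    exact hne (Matrix.ext h0)
  rw [trace_realDiagonal_mul_lie_adInv hθ]
  exact Finset.sum_pos' (fun i _ => Finset.sum_nonneg fun j _ => hnonneg i j) ⟨i, Finset.mem_univ i,
    Finset.sum_pos' (fun j _ => hnonneg i j) ⟨j, Finset.mem_univ j, hpos i j hij⟩⟩

end AdjointInverse

section NormalDirection

variable {ι κ : Type*}

theorem SupportedOn.add_star {P : ι → ι → Prop} {ν : Matrix ι ι ℂ} (hν : SupportedOn P ν) :
    SupportedOn (fun i j => P i j ∨ P j i) (ν + star ν) :=
  (hν.mono fun _ _ => .inl).add (hν.conjTranspose.mono fun _ _ => .inr)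

theorem eq_zero_of_add_star_eq_zero {α : Type*} [Preorder α] {d : ι → α} {ν : Matrix ι ι ℂ}
    (hν : SupportedOn (fun i j => d j < d i) ν) (h : ν + star ν = 0) : ν = 0 := by
  ext i j
  by_contra hij
  have hji : ν j i ≠ 0 := fun hji => hij (by
    rw [eq_neg_of_add_eq_zero_left h, neg_apply, star_apply, hji, star_zero, neg_zero,
      Matrix.zero_apply])
  exact lt_asymm (hν i j hij) (hν j i hji)

variable [Fintype ι]

theorem SupportedOn.mul_star_mul {P Q : ι → ι → Prop} {J ν : Matrix ι ι ℂ} (hν : SupportedOn P ν)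
    (hJ : SupportedOn Q J) (h : ∀ i j k l, Q i j → P k j → Q k l → P i l) :
    SupportedOn P (J * star ν * J) :=
  (hJ.mul hν.conjTranspose fun i j k hij hkj => (⟨j, hij, hkj⟩ : ∃ j, Q i j ∧ P k j)).mul hJ
    fun i k l ⟨j, hij, hkj⟩ hkl => h i j k l hij hkj hkl

variable [DecidableEq ι]

/-- `ν * star u` is normal at `u`, for the trace form, to the products `β' * χ * β` of matrices with
`β'` block diagonal for `c` and `a`-triangular, `χ` `d`-triangular and `β` `m`-triangular. -/
structure IsNormalDirection (c : ι → κ) (a d m : ι → ℝ) (u : unitary (Matrix ι ι ℂ))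
    (ν : Matrix ι ι ℂ) : Prop where
  supportedOn_middle : SupportedOn (fun i j => d j < d i) ν
  supportedOn_left : SupportedOn (fun i j => c i = c j → a j < a i) ν
  supportedOn_right : SupportedOn (fun i j => m i < m j) (conjBy (star u) ν)

variable {c : ι → κ} {a d m : ι → ℝ} {u : unitary (Matrix ι ι ℂ)} {J ν ν' : Matrix ι ι ℂ}

theorem IsNormalDirection.sub (hν : IsNormalDirection c a d m u ν)
    (hν' : IsNormalDirection c a d m u ν') : IsNormalDirection c a d m u (ν - ν') where
  supportedOn_middle := hν.supportedOn_middle.sub hν'.supportedOn_middle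
  supportedOn_left := hν.supportedOn_left.sub hν'.supportedOn_left
  supportedOn_right := by
    rw [map_sub]
    exact hν.supportedOn_right.sub hν'.supportedOn_right

theorem IsNormalDirection.smul (hν : IsNormalDirection c a d m u ν) (z : ℂ) :
    IsNormalDirection c a d m u (z • ν) where
  supportedOn_middle := hν.supportedOn_middle.smul z
  supportedOn_left := hν.supportedOn_left.smul z
  supportedOn_right := by
    rw [map_smul]
    exact hν.supportedOn_right.smul z

theorem IsNormalDirection.mul_star_mul (hν : IsNormalDirection c a d m u ν)
    (hJc : BlockSupported c J) (hJa : AntiCommute J (realDiagonal a))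
    (hJd : AntiCommute J (realDiagonal d))
    (hJm : AntiCommute (conjBy (star u) J) (realDiagonal m)) :
    IsNormalDirection c a d m u (J * star ν * J) where
  supportedOn_middle := by
    rw [antiCommute_realDiagonal_iff] at hJd
    exact hν.supportedOn_middle.mul_star_mul hJd fun i j k l hij hkj hkl => by linarith
  supportedOn_left := by
    rw [antiCommute_realDiagonal_iff] at hJa
    refine hν.supportedOn_left.mul_star_mul (Q := fun i j => c i = c j ∧ -a i = a j)
      (fun i j hij => ⟨hJc i j hij, hJa i j hij⟩) fun i j k l hij hkj hkl hil => ?_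
    linarith [hkj (hkl.1.trans (hil.symm.trans hij.1)), hij.2, hkl.2]
  supportedOn_right := by
    rw [antiCommute_realDiagonal_iff] at hJm
    rw [map_mul, map_mul, map_star]
    exact hν.supportedOn_right.mul_star_mul hJm fun i j k l hij hkj hkl => by linarith

theorem antiCommute_add_star_sub (hJs : IsSelfAdjoint J) (hJ : J * J = 1) (ν : Matrix ι ι ℂ) :
    AntiCommute J (ν - J * star ν * J + star (ν - J * star ν * J)) := by
  rw [AntiCommute, SemiconjBy, star_sub, star_mul, star_mul, star_star, hJs.star_eq]
  have hleft (X : Matrix ι ι ℂ) : J * (J * X) = X := by rw [← mul_assoc, hJ, one_mul]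
  simp only [mul_add, mul_sub, add_mul, sub_mul, neg_mul, mul_assoc, hleft, hJ, mul_one]
  abel

end NormalDirection

section SecondVariation

variable {ι κ : Type*} [Fintype ι] [DecidableEq ι]

/-- A nearest configuration with `A = realDiagonal a`, `M = conjBy u (realDiagonal m)` and diagonal
defect `realDiagonal d`, the unitary `u` commuting with the defect. -/
structure IsDiagonalNearest (c : ι → κ) (J : Matrix ι ι ℂ) (a d m : ι → ℝ)
    (u : unitary (Matrix ι ι ℂ)) : Prop
    extends IsNearest c J (realDiagonal a) (conjBy u (realDiagonal m)) where
  defect_eq : realDiagonal a - blockPart c (conjBy u (realDiagonal m)) = realDiagonal d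
  blockSupported_unitary : BlockSupported d (u : Matrix ι ι ℂ)

variable {c : ι → κ} {a d m : ι → ℝ} {u : unitary (Matrix ι ι ℂ)} {J ν θ : Matrix ι ι ℂ}

namespace IsDiagonalNearest

theorem antiCommute_defect (h : IsDiagonalNearest c J a d m u) : AntiCommute J (realDiagonal d) :=
  h.defect_eq ▸ h.toOddPair.antiCommute_defect

theorem antiCommute_conjBy_star (h : IsDiagonalNearest c J a d m u) :
    AntiCommute (conjBy (star u) J) (realDiagonal m) := by
  simpa only [conjBy_star_conjBy] using h.antiCommute_right.map (conjBy (star u))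

theorem trace_lie_adInv_le (h : IsDiagonalNearest c J a d m u) (hθ : IsSelfAdjoint θ)
    (hJθ : AntiCommute J θ) (hθa : SupportedOn (fun i j => a i ≠ a j) (blockPart c θ))
    (hθm : SupportedOn (fun i j => m i ≠ m j) (conjBy (star u) θ)) :
    (realDiagonal d * ⁅adInv m (conjBy (star u) θ), conjBy (star u) θ⁆).trace.re ≤
      (realDiagonal d * ⁅adInv a (blockPart c θ), blockPart c θ⁆).trace.re := by
  have hskew {b : ι → ℝ} {X : Matrix ι ι ℂ} (hX : IsSelfAdjoint X) :
      adInv b X ∈ skewAdjoint (Matrix ι ι ℂ) := by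
    rw [skewAdjoint.mem_iff, star_adInv, hX.star_eq]
  have hθ' := isSelfAdjoint_conjBy_iff (u := star u).2 hθ
  have hθc : IsSelfAdjoint (blockPart c θ) := by
    rw [IsSelfAdjoint, ← blockPart_star, hθ.star_eq]
  have hJθc : AntiCommute J (blockPart c θ) := by
    rw [AntiCommute, SemiconjBy, ← map_neg, ← blockPart_mul_left h.blockSupported_grading,
      ← blockPart_mul_right _ h.blockSupported_grading, hJθ.eq]
  have hK : conjBy u (adInv m (conjBy (star u) θ)) ∈ skewAdjoint (Matrix ι ι ℂ) := by
    rw [skewAdjoint.mem_iff, ← map_star, skewAdjoint.mem_iff.1 (hskew hθ'), map_neg]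
  have hJK : Commute J (conjBy u (adInv m (conjBy (star u) θ))) := by
    simpa only [conjBy_conjBy_star] using
      (h.antiCommute_conjBy_star.commute_adInv (hJθ.map (conjBy (star u)))).map (conjBy u)
  have hKM : ⁅conjBy u (adInv m (conjBy (star u) θ)), conjBy u (realDiagonal m)⁆ = θ := by
    rw [← conjBy_lie, lie_adInv_realDiagonal hθm, conjBy_conjBy_star]
  have hHA := lie_adInv_realDiagonal hθa
  have hvar := (h.variation hK hJK (hskew hθc) (h.antiCommute_left.commute_adInv hJθc)
    ((supportedOn_mask _ θ).adInv a)).2 (by rw [hHA, hKM])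
  have hD : conjBy u (realDiagonal d) = realDiagonal d :=
    conjBy_eq_self (commute_realDiagonal_iff.2 h.blockSupported_unitary)
  rw [← trace_conjBy u, map_mul, conjBy_lie, hD, conjBy_conjBy_star]
  rwa [h.defect_eq, hHA, hKM, mul_sub, trace_sub, Complex.sub_re, sub_nonneg] at hvar

theorem supportedOn_conjBy_star (h : IsDiagonalNearest c J a d m u)
    (hν : IsNormalDirection c a d m u ν) :
    SupportedOn (fun i j => d j < d i ∧ m i < m j) (conjBy (star u) ν) := by
  have hu := h.blockSupported_unitary
  have hd : SupportedOn (fun i j => d j < d i) (conjBy (star u) ν) := by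
    rw [Unitary.conjStarAlgAut_star_apply]
    exact (SupportedOn.mul hu.star hν.supportedOn_middle fun i j k hij hjk => hjk.trans_eq hij.symm
      ).mul hu fun i j k hij hjk => hjk.symm.trans_lt hij
  exact fun i j hij => ⟨hd i j hij, hν.supportedOn_right i j hij⟩

theorem eq_zero_of_antiCommute (h : IsDiagonalNearest c J a d m u)
    (hν : IsNormalDirection c a d m u ν) (hJν : AntiCommute J (ν + star ν)) : ν = 0 := by
  have hself := IsSelfAdjoint.add_star_self ν
  have hleft : SupportedOn (fun i j => (d j < d i ∧ a j < a i) ∨ (d i < d j ∧ a i < a j))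
      (blockPart c (ν + star ν)) := by
    have hsupp : SupportedOn (fun i j => d j < d i ∧ (c i = c j → a j < a i)) ν := fun i j hij =>
      ⟨hν.supportedOn_middle i j hij, hν.supportedOn_left i j hij⟩
    exact (hsupp.add_star.mask _).mono fun i j ⟨hij, h⟩ =>
      h.imp (fun h => ⟨h.1, h.2 hij⟩) fun h => ⟨h.1, h.2 hij.symm⟩
  have hright : SupportedOn (fun i j => (d j < d i ∧ m i < m j) ∨ (d i < d j ∧ m j < m i))
      (conjBy (star u) (ν + star ν)) := by
    rw [map_add, map_star]
    exact (h.supportedOn_conjBy_star hν).add_star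
  have hle := h.trace_lie_adInv_le hself hJν
    (hleft.mono fun i j hij => hij.elim (fun hij => hij.2.ne') fun hij => hij.2.ne)
    (hright.mono fun i j hij => hij.elim (fun hij => hij.2.ne) fun hij => hij.2.ne')
  have hnonpos := trace_realDiagonal_mul_lie_adInv_nonpos (d := d) (m := a)
    (show IsSelfAdjoint (blockPart c (ν + star ν)) by
      rw [IsSelfAdjoint, ← blockPart_star, hself.star_eq])
    (hleft.mono fun i j hij => hij.elim (fun hij => by nlinarith) fun hij => by nlinarith)
  by_contra hne
  have hpos := trace_realDiagonal_mul_lie_adInv_pos (d := d) (m := m)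
    (isSelfAdjoint_conjBy_iff (u := star u).2 hself)
    (hright.mono fun i j hij => hij.elim (fun hij => by nlinarith) fun hij => by nlinarith)
    fun h0 => hne (eq_zero_of_add_star_eq_zero hν.supportedOn_middle
      ((map_eq_zero_iff _ (conjBy (star u)).injective).1 h0))
  exact (hpos.trans_le hle).not_ge hnonpos

theorem eq_zero_of_isNormalDirection (h : IsDiagonalNearest c J a d m u)
    (hν : IsNormalDirection c a d m u ν) : ν = 0 := by
  have hfix {ν : Matrix ι ι ℂ} (hν : IsNormalDirection c a d m u ν) : ν = J * star ν * J :=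
    sub_eq_zero.1 (h.eq_zero_of_antiCommute
      (hν.sub (hν.mul_star_mul h.blockSupported_grading h.antiCommute_left h.antiCommute_defect
        h.antiCommute_conjBy_star))
      (antiCommute_add_star_sub h.isSelfAdjoint_grading h.grading_mul_self ν))
  have hI := hfix (hν.smul Complex.I)
  rw [star_smul, mul_smul_comm, smul_mul_assoc, ← hfix hν, Complex.star_def, Complex.conj_I,
    neg_smul] at hI
  have : IsAddTorsionFree (Matrix ι ι ℂ) := .of_module_rat _
  exact (smul_eq_zero_iff_right Complex.I_ne_zero).1 (self_eq_neg.1 hI)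

end IsDiagonalNearest

end SecondVariation

section TriangularOrthonormalization

open scoped ComplexOrder

variable {𝕜 ρ : Type*} [RCLike 𝕜]

theorem exists_supportedOn_le_conjTranspose_mul_mul_eq_one [LinearOrder ρ] [WellFoundedLT ρ]
    [LocallyFiniteOrderBot ρ] [Fintype ρ] {S : Matrix ρ ρ 𝕜} (hS : S.PosDef) :
    ∃ R : Matrix ρ ρ 𝕜, SupportedOn (fun l i => l ≤ i) R ∧ Rᴴ * S * R = 1 := by
  set N := LDL.lowerInv hS
  have hdiag : N * S * Nᴴ = diagonal (LDL.diagEntries hS) := (LDL.diag_eq_lowerInv_conj hS).symm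
  have hpos : ∀ i, 0 < LDL.diagEntries hS i := by
    rw [← posDef_diagonal_iff, ← hdiag]
    exact hS.mul_mul_conjTranspose_same (vecMul_injective_of_isUnit (isUnit_of_invertible N))
  set δ : ρ → 𝕜 := fun i => ((√(RCLike.re (LDL.diagEntries hS i)))⁻¹ : ℝ)
  have hδ (i : ρ) : δ i * LDL.diagEntries hS i * δ i = 1 := by
    obtain ⟨hre, him⟩ := RCLike.pos_iff.1 (hpos i)
    rw [← RCLike.re_add_im (LDL.diagEntries hS i), him, RCLike.ofReal_zero, zero_mul, add_zero,
      ← RCLike.ofReal_mul, ← RCLike.ofReal_mul, ← RCLike.ofReal_one, RCLike.ofReal_inj]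
    have := Real.sq_sqrt hre.le
    have := (Real.sqrt_pos.2 hre).ne'
    field_simp
    linarith
  refine ⟨Nᴴ * diagonal δ, ?_, ?_⟩
  · refine SupportedOn.mul (P := fun l i => l ≤ i) (fun l i hli => ?_)
      (supportedOn_diagonal (P := fun l i => l ≤ i) (fun _ => le_rfl) δ) fun _ _ _ => le_trans
    by_contra h
    exact hli (star_eq_zero.2 (LDL.lowerInv_triangular hS (not_le.1 h)))
  · rw [conjTranspose_mul, conjTranspose_conjTranspose, diagonal_conjTranspose, ← mul_assoc,
      mul_assoc _ N, mul_assoc _ (N * S), hdiag, diagonal_mul_diagonal, diagonal_mul_diagonal,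
      ← diagonal_one]
    congr 1
    ext i
    rw [← hδ i, Pi.star_apply, RCLike.star_def, RCLike.conj_ofReal]

theorem exists_supportedOn_conjTranspose_mul_mul_eq_one {α : Type*} [LinearOrder α]
    [Fintype ρ] [DecidableEq ρ] {S : Matrix ρ ρ 𝕜} (hS : S.PosDef) (f : ρ → α) :
    ∃ R : Matrix ρ ρ 𝕜, SupportedOn (fun l i => f l ≤ f i) R ∧ Rᴴ * S * R = 1 := by
  set e₀ := (Fintype.equivFin ρ).symm
  set e := (Tuple.sort (f ∘ e₀)).trans e₀
  have he : Monotone (f ∘ e) := Tuple.monotone_sort (f ∘ e₀)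
  obtain ⟨R, hR, hRS⟩ :=
    exists_supportedOn_le_conjTranspose_mul_mul_eq_one (hS.submatrix e.injective)
  refine ⟨R.submatrix e.symm e.symm, fun l i hli => ?_, ?_⟩
  · simpa using he (hR _ _ hli)
  · have := congrArg (fun X : Matrix _ _ 𝕜 => X.submatrix e.symm e.symm) hRS
    rw [submatrix_one_equiv] at this
    simpa [← submatrix_mul_equiv _ _ e.symm e.symm e.symm] using this

end TriangularOrthonormalization

section Isometries

variable {ι ρ : Type*} [Fintype ι] [DecidableEq ρ] {W : Matrix ι ρ ℂ}

theorem sum_normSq_eq_one_of_isometry (hW : Wᴴ * W = 1) (i : ρ) :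
    ∑ j, Complex.normSq (W j i) = 1 := by
  have h := congrFun (congrFun hW i) i
  rw [mul_apply, one_apply_eq] at h
  rw [← Complex.ofReal_inj, Complex.ofReal_one, ← h, Complex.ofReal_sum]
  exact Finset.sum_congr rfl fun j _ => Complex.normSq_eq_conj_mul_self

theorem isCompact_isometries : IsCompact {W : Matrix ι ρ ℂ | Wᴴ * W = 1} := by
  have hball : IsCompact ((Set.univ.pi fun _ => Set.univ.pi fun _ => Metric.closedBall 0 1) :
      Set (Matrix ι ρ ℂ)) :=
    isCompact_univ_pi fun _ => isCompact_univ_pi fun _ => isCompact_closedBall _ _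
  refine hball.of_isClosed_subset
    (isClosed_eq (continuous_id.matrix_conjTranspose.matrix_mul continuous_id) continuous_const)
    fun W hW j _ i _ => ?_
  rw [mem_closedBall_zero_iff, ← sq_le_one_iff₀ (norm_nonneg _), ← Complex.normSq_eq_norm_sq,
    ← sum_normSq_eq_one_of_isometry hW i]
  exact Finset.single_le_sum (f := fun j => Complex.normSq (W j i))
    (fun j _ => Complex.normSq_nonneg _) (Finset.mem_univ j)

variable [DecidableEq ι] [Fintype ρ] {f : ι → ℝ} {e : ρ → ι}

theorem trace_isometry_conj_realDiagonal_le (hW : Wᴴ * W = 1)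
    (h : SupportedOn (fun j i => f j ≤ f (e i)) W) :
    (Wᴴ * realDiagonal f * W).trace.re ≤ ∑ i, f (e i) := by
  have hentry (i : ρ) : ((Wᴴ * realDiagonal f * W) i i).re =
      ∑ j, f j * Complex.normSq (W j i) := by
    rw [mul_apply, Complex.re_sum]
    refine Finset.sum_congr rfl fun j _ => ?_
    rw [mul_diagonal, conjTranspose_apply, mul_right_comm, Complex.star_def,
      ← Complex.normSq_eq_conj_mul_self, ← Complex.ofReal_mul, Complex.ofReal_re, mul_comm]
  rw [trace, Complex.re_sum]
  refine Finset.sum_le_sum fun i _ => ?_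
  calc ((Wᴴ * realDiagonal f * W) i i).re = ∑ j, f j * Complex.normSq (W j i) := hentry i
    _ ≤ ∑ j, f (e i) * Complex.normSq (W j i) := by
        refine Finset.sum_le_sum fun j _ => ?_
        by_cases hji : W j i = 0
        · simp [hji]
        · exact mul_le_mul_of_nonneg_right (h j i hji) (Complex.normSq_nonneg _)
    _ = f (e i) := by rw [← Finset.mul_sum, sum_normSq_eq_one_of_isometry hW, mul_one]

theorem le_trace_isometry_conj_realDiagonal (hW : Wᴴ * W = 1)
    (h : SupportedOn (fun j i => f (e i) ≤ f j) W) :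
    ∑ i, f (e i) ≤ (Wᴴ * realDiagonal f * W).trace.re := by
  have hneg : realDiagonal (-f) = -realDiagonal f := by
    ext i j
    by_cases hij : i = j <;> simp [hij]
  have := trace_isometry_conj_realDiagonal_le (f := -f) hW (h.mono fun j i => neg_le_neg)
  rw [hneg, Matrix.mul_neg, Matrix.neg_mul, trace_neg, Complex.neg_re] at this
  simpa using this

end Isometries

section ColumnSpaces

variable {ι ρ κ : Type*} [Fintype ι] [Fintype ρ] [DecidableEq ρ]

theorem BlockSupported.of_mul_eq_one {c : ρ → κ} {X Y : Matrix ρ ρ ℂ} (hX : BlockSupported c X)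
    (h : X * Y = 1) : BlockSupported c Y :=
  blockSupported_iff_forall_commute.2 fun g =>
    (show Commute ↑(⟨X, Y, h, mul_eq_one_comm.1 h⟩ : (Matrix ρ ρ ℂ)ˣ) (diagonal (g ∘ c)) from
      blockSupported_iff_forall_commute.1 hX g).units_inv_left

theorem BlockSupported.mul_mul_conjTranspose_of_isometry {c : ι → κ} {c' : ρ → κ}
    {T : Matrix ι ρ ℂ} {R : Matrix ρ ρ ℂ} (hT : SupportedOn (fun j i => c j = c' i) T)
    (hTR : (T * R)ᴴ * (T * R) = 1) : BlockSupported c (T * R * (T * R)ᴴ) := by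
  have hGram : BlockSupported c' (Tᴴ * T) :=
    hT.conjTranspose.mul hT fun _ _ _ hij hjk => hij.symm.trans hjk
  have hinv : Tᴴ * T * (R * Rᴴ) = 1 := by
    rw [← mul_assoc, mul_eq_one_comm, ← hTR, conjTranspose_mul]
    simp only [Matrix.mul_assoc]
  have hQ := hGram.of_mul_eq_one hinv
  rw [conjTranspose_mul, ← Matrix.mul_assoc, Matrix.mul_assoc T]
  exact (hT.mul hQ fun _ _ _ => Eq.trans).mul hT.conjTranspose fun _ _ _ hij hkj =>
    hij.trans hkj.symm

theorem exists_isometry_of_mul_eq_one {α : Type*} [LinearOrder α] {T : Matrix ι ρ ℂ}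
    {L : Matrix ρ ι ℂ} (hL : L * T = 1) (f : ρ → α) :
    ∃ R : Matrix ρ ρ ℂ, SupportedOn (fun l i => f l ≤ f i) R ∧ (T * R)ᴴ * (T * R) = 1 ∧
      T * R * (T * R)ᴴ * T = T := by
  have hinj : Function.Injective T.mulVec := Function.LeftInverse.injective (g := L.mulVec)
    fun v => by rw [mulVec_mulVec, hL, one_mulVec]
  open scoped ComplexOrder in
  obtain ⟨R, hR, hRT⟩ :=
    exists_supportedOn_conjTranspose_mul_mul_eq_one (PosDef.conjTranspose_mul_self T hinj) f
  have hinv : R * (Rᴴ * (Tᴴ * T)) = 1 := mul_eq_one_comm.1 hRT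
  refine ⟨R, hR, ?_, ?_⟩
  · rw [← hRT, conjTranspose_mul]
    simp only [Matrix.mul_assoc]
  · calc T * R * (T * R)ᴴ * T = T * (R * (Rᴴ * (Tᴴ * T))) := by
          rw [conjTranspose_mul]
          simp only [Matrix.mul_assoc]
      _ = T := by rw [hinv, Matrix.mul_one]

theorem mul_conjTranspose_eq_of_isometry {V W : Matrix ι ρ ℂ} (hV : Vᴴ * V = 1)
    (hWV : W * Wᴴ * V = V) : W * Wᴴ = V * Vᴴ := by
  have hY : (Wᴴ * V) * (Wᴴ * V)ᴴ = 1 := by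
    rw [mul_eq_one_comm, conjTranspose_mul, conjTranspose_conjTranspose, Matrix.mul_assoc,
      ← Matrix.mul_assoc W, hWV, hV]
  calc W * Wᴴ = W * ((Wᴴ * V) * (Wᴴ * V)ᴴ) * Wᴴ := by rw [hY, Matrix.mul_one]
    _ = (W * Wᴴ * V) * (W * Wᴴ * V)ᴴ := by
        simp only [conjTranspose_mul, conjTranspose_conjTranspose, Matrix.mul_assoc]
    _ = V * Vᴴ := by rw [hWV]

end ColumnSpaces

section Schubert

theorem isClosed_setOf_supportedOn {α β R : Type*} [Zero R] [TopologicalSpace R] [T2Space R]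
    (P : α → β → Prop) : IsClosed {X : Matrix α β R | SupportedOn P X} := by
  simp only [SupportedOn, Set.ofPred_forall]
  refine isClosed_iInter fun i => isClosed_iInter fun j => ?_
  by_cases h : P i j
  · simp [h]
  · simpa [h] using isClosed_eq (continuous_id.matrix_elem i j) continuous_const

variable {ι ρ κ : Type*} [Fintype ι] [Fintype ρ] {c : ι → κ} {a m : ι → ℝ} {e : ρ → ι}

theorem submatrix_mul_submatrix_of_supportedOn (he : e.Injective) (X : Matrix ι ι ℂ)
    {χ : Matrix ι ι ℂ} (hχ : SupportedOn (fun j i => i ∈ Set.range e → j ∈ Set.range e) χ) :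
    X.submatrix id e * χ.submatrix e e = (X * χ).submatrix id e := by
  ext j i
  exact Fintype.sum_of_injective e he _ _ (fun l hl => mul_eq_zero_of_right _
    (not_imp_comm.1 (hχ l (e i)) fun h => hl (h ⟨i, rfl⟩))) fun _ => rfl

variable [DecidableEq ρ]

/-- The matrices `k` moving some subspace in Schubert position with respect to the flag of `m` onto
a subspace in Schubert position with respect to the flag of `a` and adapted to the blocks of `c`.
The two subspaces are given by matrices `W`, `W'` with orthonormal columns, and their positions by
the values of `m` and `a` along `e`. -/
def schubertIncidence (c : ι → κ) (a m : ι → ℝ) (e : ρ → ι) : Set (Matrix ι ι ℂ) :=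
  {k | ∃ W W' : Matrix ι ρ ℂ, Wᴴ * W = 1 ∧ W'ᴴ * W' = 1 ∧
    SupportedOn (fun j i => m j ≤ m (e i)) W ∧ SupportedOn (fun j i => a (e i) ≤ a j) W' ∧
    BlockSupported c (W' * W'ᴴ) ∧ W' * W'ᴴ * (k * W) = k * W}

theorem isClosed_schubertIncidence : IsClosed (schubertIncidence c a m e) := by
  let I : Set (Matrix ι ρ ℂ) := {W | Wᴴ * W = 1}
  have : CompactSpace I := isCompact_iff_compactSpace.1 isCompact_isometries
  let F : Set ((I × I) × Matrix ι ι ℂ) := {x |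
    SupportedOn (fun j i => m j ≤ m (e i)) x.1.1.1 ∧
    SupportedOn (fun j i => a (e i) ≤ a j) x.1.2.1 ∧ BlockSupported c (x.1.2.1 * x.1.2.1ᴴ) ∧
    x.1.2.1 * x.1.2.1ᴴ * (x.2 * x.1.1.1) = x.2 * x.1.1.1}
  have hfst : Continuous fun x : (I × I) × Matrix ι ι ℂ => x.1.1.1 := by fun_prop
  have hsnd : Continuous fun x : (I × I) × Matrix ι ι ℂ => x.1.2.1 := by fun_prop
  have hproj := hsnd.matrix_mul hsnd.matrix_conjTranspose
  have himage := continuous_snd.matrix_mul hfst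
  have hF : IsClosed F :=
    ((isClosed_setOf_supportedOn _).preimage hfst).inter
      (((isClosed_setOf_supportedOn _).preimage hsnd).inter
        (((isClosed_setOf_supportedOn _).preimage hproj).inter
          (isClosed_eq (hproj.matrix_mul himage) himage)))
  convert isClosedMap_snd_of_compactSpace F hF using 1
  ext k
  constructor
  · rintro ⟨W, W', hW, hW', h⟩
    exact ⟨⟨(⟨W, hW⟩, ⟨W', hW'⟩), k⟩, h, rfl⟩
  · rintro ⟨⟨⟨⟨W, hW⟩, ⟨W', hW'⟩⟩, k'⟩, h, rfl⟩
    exact ⟨W, W', hW, hW', h⟩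

variable [DecidableEq ι]

theorem sum_le_sum_of_mem_schubertIncidence {k : unitary (Matrix ι ι ℂ)}
    (hk : (k : Matrix ι ι ℂ) ∈ schubertIncidence c a m e)
    (hka : blockPart c (conjBy k (realDiagonal m)) = realDiagonal a) :
    ∑ i, a (e i) ≤ ∑ i, m (e i) := by
  obtain ⟨W, W', hW, hW', hWm, hWa, hWc, hWk⟩ := hk
  have hV : ((k : Matrix ι ι ℂ) * W)ᴴ * ((k : Matrix ι ι ℂ) * W) = 1 := by
    rw [conjTranspose_mul, Matrix.mul_assoc, ← Matrix.mul_assoc _ _ W, ← star_eq_conjTranspose,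
      Unitary.coe_star_mul_self, Matrix.one_mul, hW]
  have hproj : W' * W'ᴴ = conjBy k (W * Wᴴ) := by
    rw [mul_conjTranspose_eq_of_isometry hV hWk, Unitary.conjStarAlgAut_apply, conjTranspose_mul]
    simp only [Matrix.mul_assoc, star_eq_conjTranspose]
  calc ∑ i, a (e i) ≤ (W'ᴴ * realDiagonal a * W').trace.re :=
        le_trace_isometry_conj_realDiagonal hW' hWa
    _ = (W' * W'ᴴ * blockPart c (conjBy k (realDiagonal m))).trace.re := by
        rw [hka, Matrix.trace_mul_comm, ← Matrix.mul_assoc]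
    _ = (conjBy k (W * Wᴴ * realDiagonal m)).trace.re := by
        rw [trace_mul_blockPart hWc, hproj, map_mul]
    _ = (Wᴴ * realDiagonal m * W).trace.re := by
        rw [trace_conjBy, Matrix.trace_mul_comm (Wᴴ * _), ← Matrix.mul_assoc]
    _ ≤ ∑ i, m (e i) := trace_isometry_conj_realDiagonal_le hW hWm

theorem SupportedOn.inv_of_le {α : Type*} [LinearOrder α] {f : ι → α} {X : Matrix ι ι ℂ}
    (hX : SupportedOn (fun i j => f i ≤ f j) X) (hdet : IsUnit X.det) :
    SupportedOn (fun i j => f i ≤ f j) X⁻¹ := by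
  let _ := X.invertibleOfIsUnitDet hdet
  have htri : BlockTriangular X f := fun i j hij => not_imp_comm.1 (hX i j) hij.not_ge
  exact fun i j hij => le_of_not_gt fun hlt =>
    hij (blockTriangular_inv_of_blockTriangular htri hlt)

theorem mul_mem_schubertIncidence (he : e.Injective) {β' χ β : Matrix ι ι ℂ}
    (hβ' : SupportedOn (fun j i => c j = c i ∧ a i ≤ a j) β')
    (hχ : SupportedOn (fun j i => i ∈ Set.range e → j ∈ Set.range e) χ)
    (hβ : SupportedOn (fun j i => m j ≤ m i) β) (hdet : (β' * χ * β).det ≠ 0) :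
    β' * χ * β ∈ schubertIncidence c a m e := by
  rw [det_mul, det_mul] at hdet
  have hβu : IsUnit β.det := (right_ne_zero_of_mul hdet).isUnit
  have hβ'u : IsUnit β'.det := (left_ne_zero_of_mul (left_ne_zero_of_mul hdet)).isUnit
  have hinv := hβ.inv_of_le hβu
  obtain ⟨R, hR, hW, -⟩ := exists_isometry_of_mul_eq_one (T := β⁻¹.submatrix id e)
    (L := β.submatrix e id) (by
      rw [← submatrix_mul _ _ e id e Function.bijective_id, mul_nonsing_inv _ hβu,
        submatrix_one e he]) (m ∘ e)
  obtain ⟨R', hR', hW', hWT'⟩ := exists_isometry_of_mul_eq_one (T := β'.submatrix id e)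
    (L := β'⁻¹.submatrix e id) (by
      rw [← submatrix_mul _ _ e id e Function.bijective_id, nonsing_inv_mul _ hβ'u,
        submatrix_one e he]) (fun i => -a (e i))
  have hspan : β' * χ * β * β⁻¹.submatrix id e = β'.submatrix id e * χ.submatrix e e := by
    calc β' * χ * β * β⁻¹.submatrix id e = (β' * χ * β * β⁻¹).submatrix id e := rfl
      _ = (β' * χ).submatrix id e := by rw [mul_nonsing_inv_cancel_right _ _ hβu]
      _ = _ := (submatrix_mul_submatrix_of_supportedOn he _ hχ).symm
  refine ⟨_, _, hW, hW', ?_, ?_, ?_, ?_⟩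
  · exact SupportedOn.mul (fun j i => hinv j (e i)) hR fun _ _ _ => le_trans
  · exact SupportedOn.mul (P := fun j i => a (e i) ≤ a j) (fun j i hij => (hβ' j (e i) hij).2) hR'
      fun j l i hjl hli => (neg_le_neg_iff.1 hli).trans hjl
  · exact .mul_mul_conjTranspose_of_isometry (c' := c ∘ e) (fun j i hij => (hβ' j (e i) hij).1) hW'
  · rw [← Matrix.mul_assoc (β' * χ * β), hspan, ← Matrix.mul_assoc, ← Matrix.mul_assoc, hWT']

theorem sum_le_sum_of_isNormalDirection_eq_zero {d : ι → ℝ} {u k : unitary (Matrix ι ι ℂ)}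
    (hu : BlockSupported d (u : Matrix ι ι ℂ))
    (htransverse : ∀ ν, IsNormalDirection c a d m u ν → ν = 0)
    (hka : blockPart c (conjBy k (realDiagonal m)) = realDiagonal a) :
    ∑ i : {i // 0 < d i}, a i ≤ ∑ i : {i // 0 < d i}, m i := by
  have hdense : DenseRange (maskMul (R := ℂ) (fun i j => c i = c j ∧ a j ≤ a i)
      (fun i j => 0 < d j → 0 < d i) fun i j => m i ≤ m j) := by
    refine denseRange_maskMul (χ := u) (hu.mono fun i j hij hj => hj.trans_eq hij.symm)
      (fun i => ⟨rfl, le_rfl⟩) (fun i => le_rfl) fun ξ hξ hleft hright => ?_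
    have hν := htransverse (u * ξ)
      { supportedOn_middle := SupportedOn.mul hu hξ fun i j k hij hjk => by
          rw [Classical.not_imp] at hjk
          linarith
        supportedOn_left := hleft.mono fun i j hij hc => by
          by_contra h
          exact hij ⟨hc.symm, not_lt.1 h⟩
        supportedOn_right := by
          rw [Unitary.conjStarAlgAut_star_apply, ← mul_assoc, Unitary.coe_star_mul_self, one_mul]
          exact hright.mono fun i j => lt_of_not_ge }
    simpa [← mul_assoc] using congrArg (star (u : Matrix ι ι ℂ) * ·) hν
  refine sum_le_sum_of_mem_schubertIncidence (k := k) (e := Subtype.val) ?_ hka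
  have hdet : (k : Matrix ι ι ℂ).det ≠ 0 :=
    ((isUnit_iff_isUnit_det _).1 (Unitary.toUnits k).isUnit).ne_zero
  have hopen : IsOpen {x : Matrix ι ι ℂ | x.det ≠ 0} :=
    isOpen_ne_fun continuous_id.matrix_det continuous_const
  refine closure_minimal ?_ isClosed_schubertIncidence
    (hdense.open_subset_closure_inter hopen hdet)
  rintro _ ⟨hx, X, rfl⟩
  refine mul_mem_schubertIncidence Subtype.val_injective (supportedOn_mask _ _)
    ?_ (supportedOn_mask _ _) hx
  exact (supportedOn_mask _ _).mono fun j i => by simp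

end Schubert

section EvenConjugation

variable {ι κ : Type*} [Fintype ι] [DecidableEq ι] {c : ι → κ} {J A M : Matrix ι ι ℂ}

theorem sum_conjBy_diagonal_eq {α : Type*} {d : ι → α} {u : unitary (Matrix ι ι ℂ)}
    (hu : BlockSupported d (u : Matrix ι ι ℂ)) (X : Matrix ι ι ℂ) (p : α → Prop)
    [DecidablePred p] :
    ∑ i : {i // p (d i)}, conjBy u X i i = ∑ i : {i // p (d i)}, X i i := by
  let P : Matrix ι ι ℂ := diagonal ((fun x => if p x then 1 else 0) ∘ d)
  have hP : conjBy u P = P := conjBy_eq_self (blockSupported_iff_forall_commute.1 hu _)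
  have htrace (Y : Matrix ι ι ℂ) : (P * Y).trace = ∑ i : {i // p (d i)}, Y i i := by
    rw [trace, ← Finset.sum_subtype (Finset.univ.filter fun i => p (d i)) (by simp)
      (fun i => Y i i), Finset.sum_filter]
    refine Finset.sum_congr rfl fun i _ => ?_
    rw [diag_apply, diagonal_mul, Function.comp_apply, ite_mul, one_mul, zero_mul]
  rw [← htrace, ← htrace, ← trace_conjBy u (P * X), map_mul, hP]

theorem AntiCommute.trace_eq_zero (hJ : J * J = 1) {X : Matrix ι ι ℂ} (hX : AntiCommute J X) :
    X.trace = 0 := by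
  have : X.trace = -X.trace := by
    calc X.trace = (J * (J * X)).trace := by rw [← mul_assoc, hJ, one_mul]
      _ = -X.trace := by
        rw [trace_mul_comm, hX.eq, mul_assoc, hJ, mul_one, trace_neg]
  exact self_eq_neg.1 this

theorem IsDiagonalNearest.eq_zero {a d m : ι → ℝ} {u k : unitary (Matrix ι ι ℂ)}
    (h : IsDiagonalNearest c J a d m u)
    (hk : blockPart c (conjBy k (realDiagonal m)) = realDiagonal a) : d = 0 := by
  have hsum := sum_le_sum_of_isNormalDirection_eq_zero h.blockSupported_unitary
    (fun _ => h.eq_zero_of_isNormalDirection) hk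
  have hdiag (i : ι) : (conjBy u (realDiagonal m) i i).re = a i - d i := by
    have := congrArg Complex.re (congrFun (congrFun h.defect_eq i) i)
    simp only [realDiagonal, Matrix.sub_apply, diagonal_apply_eq, mask_apply, if_true,
      Complex.sub_re, Complex.ofReal_re] at this
    linarith
  have hm : ∑ i : {i // 0 < d i}, (a i - d i) = ∑ i : {i // 0 < d i}, m i := by
    have := congrArg Complex.re
      (sum_conjBy_diagonal_eq h.blockSupported_unitary (realDiagonal m) (0 < ·))
    simpa only [Complex.re_sum, hdiag, diagonal_apply_eq, Complex.ofReal_re] using this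
  have hle (i : ι) : d i ≤ 0 := by
    by_contra! hi
    have hpos : 0 < ∑ i : {i // 0 < d i}, d i :=
      Finset.sum_pos (fun i _ => i.2) ⟨⟨i, hi⟩, Finset.mem_univ _⟩
    rw [Finset.sum_sub_distrib] at hm
    linarith
  have htrace : ∑ i, d i = 0 := by
    have := h.antiCommute_defect.trace_eq_zero h.grading_mul_self
    rw [trace_diagonal] at this
    exact_mod_cast this
  exact funext fun i =>
    (Finset.sum_eq_zero_iff_of_nonpos fun i _ => hle i).1 htrace i (Finset.mem_univ i)

theorem IsNearest.blockPart_eq (h : IsNearest c J A M)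
    (hk : ∃ k : unitary (Matrix ι ι ℂ), blockPart c (conjBy k M) = A) : blockPart c M = A := by
  obtain ⟨k, hk⟩ := hk
  obtain ⟨v, a, d, hv, hA, hD⟩ := exists_eq_conjBy_realDiagonal_pair h.isSelfAdjoint_left
    h.isSelfAdjoint_defect h.blockSupported_left h.blockSupported_defect h.commute_defect.2
  have hvA : conjBy (star v) A = realDiagonal a := by rw [hA, conjBy_star_conjBy]
  have hvD : conjBy (star v) (A - blockPart c M) = realDiagonal d := by
    rw [hD, conjBy_star_conjBy]
  have hv' : BlockSupported c ((star v : unitary (Matrix ι ι ℂ)) : Matrix ι ι ℂ) := hv.star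
  obtain ⟨u, m, hu, hM⟩ := exists_eq_conjBy_realDiagonal (f := d)
    (isSelfAdjoint_conjBy_iff (u := star v).2 h.isSelfAdjoint_right)
    (commute_realDiagonal_iff.1 (hvD ▸ h.commute_defect.1.map (conjBy (star v))))
  have hdiag : IsDiagonalNearest c (conjBy (star v) J) a d m u :=
    { toIsNearest := hvA ▸ hM ▸ h.map_conjBy hv'
      defect_eq := by rw [← hvA, ← hM, ← hvD, blockPart_conjBy hv', map_sub]
      blockSupported_unitary := hu }
  have hd : d = 0 := hdiag.eq_zero (k := star v * k * v * u) <| by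
    simp only [Unitary.conjStarAlgAut_mul_apply]
    rw [← hM, conjBy_conjBy_star, blockPart_conjBy hv', hk, hvA]
  rw [hd] at hD
  refine (sub_eq_zero.1 (hD.trans ?_)).symm
  simp [realDiagonal]

theorem OddPair.exists_isNearest (h : OddPair c J A M) :
    ∃ k : unitary (Matrix ι ι ℂ), Commute J (k : Matrix ι ι ℂ) ∧ IsNearest c J A (conjBy k M) := by
  let defect (k : Matrix ι ι ℂ) : Matrix ι ι ℂ := A - blockPart c (k * M * star k)
  have hdefect : Continuous defect :=
    continuous_const.sub ((LinearMap.continuous_of_finiteDimensional _).comp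
      ((continuous_id.matrix_mul continuous_const).matrix_mul continuous_id.matrix_conjTranspose))
  have hcompact : IsCompact ({k : Matrix ι ι ℂ | star k * k = 1} ∩ {k | J * k = k * J}) :=
    isCompact_isometries.inter_right (isClosed_eq (continuous_const.matrix_mul continuous_id)
      (continuous_id.matrix_mul continuous_const))
  obtain ⟨k₀, ⟨hk₀, hJk₀⟩, hmin⟩ := hcompact.exists_isMinOn
    (f := fun k => (defect k * defect k).trace.re) ⟨1, by simp, by simp⟩
    (Complex.continuous_re.comp (hdefect.matrix_mul hdefect).matrix_trace).continuousOn
  let k : unitary (Matrix ι ι ℂ) := ⟨k₀, mem_unitaryGroup_iff'.2 hk₀⟩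
  have hk : conjBy k J = J := conjBy_eq_self (Commute.symm hJk₀)
  refine ⟨k, hJk₀, ⟨{ h with
    isSelfAdjoint_right := isSelfAdjoint_conjBy_iff.2 h.isSelfAdjoint_right
    antiCommute_right := hk ▸ h.antiCommute_right.map (conjBy k) }, fun k' hk' => ?_⟩⟩
  rw [← Unitary.conjStarAlgAut_mul_apply]
  exact hmin ⟨Unitary.coe_star_mul_self (k' * k), hk'.mul_right hJk₀⟩

theorem OddPair.exists_commute_blockPart_conjBy_eq (h : OddPair c J A M)
    (hk : ∃ k : unitary (Matrix ι ι ℂ), blockPart c (conjBy k M) = A) :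
    ∃ k : unitary (Matrix ι ι ℂ), Commute J (k : Matrix ι ι ℂ) ∧ blockPart c (conjBy k M) = A := by
  obtain ⟨k₁, hk₁⟩ := hk
  obtain ⟨k₀, hJk₀, hmin⟩ := h.exists_isNearest
  refine ⟨k₀, hJk₀, hmin.blockPart_eq ⟨k₁ * star k₀, ?_⟩⟩
  rw [Unitary.conjStarAlgAut_mul_apply, conjBy_star_conjBy, hk₁]

end EvenConjugation

section Spectrum

open Polynomial

variable {k : ℕ}

/-- The monic polynomial with the given real roots. Ordered spectra are compared through it,
since it can be computed blockwise and does not see the ordering. -/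
noncomputable def polyOfRoots (f : Fin k → ℝ) : ℂ[X] :=
  ∏ i, (X - C (f i : ℂ))

theorem roots_polyOfRoots (f : Fin k → ℝ) :
    (polyOfRoots f).roots = (List.ofFn f : Multiset ℝ).map Complex.ofReal := by
  rw [← roots_multiset_prod_X_sub_C ((List.ofFn f : Multiset ℝ).map Complex.ofReal),
    ← Fin.univ_val_map, Multiset.map_map, Multiset.map_map]
  rfl

theorem polyOfRoots_inj {f g : Fin k → ℝ} (hf : Antitone f) (hg : Antitone g) :
    polyOfRoots f = polyOfRoots g ↔ f = g := by
  refine ⟨fun h => ?_, fun h => by rw [h]⟩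
  have hroots := congrArg roots h
  rw [roots_polyOfRoots, roots_polyOfRoots] at hroots
  have hperm := Multiset.coe_eq_coe.1 (Multiset.map_injective Complex.ofReal_injective hroots)
  exact List.ofFn_injective (hperm.eq_of_pairwise' (r := (· ≥ ·))
    hf.sortedGE_ofFn.pairwise hg.sortedGE_ofFn.pairwise)

theorem antitone_eigVec {A : Matrix (Fin k) (Fin k) ℂ} (hA : A.IsHermitian) :
    Antitone (eigVec A hA) := fun _ _ hij =>
  Tuple.monotone_sort hA.eigenvalues (Fin.rev_le_rev.2 hij)

theorem charpoly_eq_polyOfRoots_eigVec {A : Matrix (Fin k) (Fin k) ℂ} (hA : A.IsHermitian) :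
    A.charpoly = polyOfRoots (eigVec A hA) := by
  rw [hA.charpoly_eq]
  exact ((Fin.revPerm.trans (Tuple.sort hA.eigenvalues)).prod_comp
    fun i => X - C (hA.eigenvalues i : ℂ)).symm

theorem eq_eigVec_iff {A : Matrix (Fin k) (Fin k) ℂ} (hA : A.IsHermitian) {f : Fin k → ℝ}
    (hf : Antitone f) : f = eigVec A hA ↔ A.charpoly = polyOfRoots f := by
  rw [charpoly_eq_polyOfRoots_eigVec hA, polyOfRoots_inj (antitone_eigVec hA) hf, eq_comm]

end Spectrum

section SymmetrizedVector

variable {p q : ℕ} {s : Fin q → ℝ}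

theorem antitone_hatPQ (hs : Antitone s) (hs0 : ∀ i, 0 ≤ s i) : Antitone (hatPQ p q s) := by
  intro i j hij
  have : (i : ℕ) ≤ j := hij
  unfold hatPQ
  split_ifs <;> first
    | omega
    | exact le_rfl
    | exact hs hij
    | exact hs0 _
    | exact neg_nonpos.2 (hs0 _)
    | exact (neg_nonpos.2 (hs0 _)).trans (hs0 _)
    | exact neg_le_neg (hs (by rw [Fin.mk_le_mk]; omega))

theorem hatPQ_injective : Function.Injective (hatPQ p q) := by
  intro s t h
  funext i
  simpa [hatPQ] using congrFun h ⟨i, by omega⟩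

theorem prod_hatPQ (hpq : q ≤ p) (s : Fin q → ℝ) {R : Type*} [CommMonoid R]
    (F : ℝ → R) : ∏ i, F (hatPQ p q s i) = F 0 ^ (p - q) * ∏ i, (F (s i) * F (-s i)) := by
  obtain ⟨r, rfl⟩ := Nat.exists_eq_add_of_le hpq
  have hhead (i : Fin q) : hatPQ (q + r) q s (Fin.castAdd q (Fin.castAdd r i)) = s i := by
    simp [hatPQ]
  have hmiddle (i : Fin r) : hatPQ (q + r) q s (Fin.castAdd q (Fin.natAdd q i)) = 0 := by
    simp [hatPQ]
  have htail (i : Fin q) : hatPQ (q + r) q s (Fin.natAdd (q + r) i) = -s i.rev := by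
    have h : ¬ q + r + (i : ℕ) < q := by omega
    simp only [hatPQ, Fin.val_natAdd, h, dif_neg, not_false_eq_true]
    rw [dif_neg (by omega)]
    congr 2
    ext
    simp only [Fin.val_rev]
    omega
  rw [Fin.prod_univ_add, Fin.prod_univ_add, Finset.prod_mul_distrib,
    ← Equiv.prod_comp Fin.revPerm fun i => F (-s i)]
  simp_rw [hhead, hmiddle, htail]
  simp only [Finset.prod_const, Finset.card_univ, Fintype.card_fin, Nat.add_sub_cancel_left,
    Fin.revPerm_apply]
  rw [mul_comm (∏ i, F (s i)), mul_assoc]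

end SymmetrizedVector

section HermitianDilation

variable {α β : Type*}

/-- The Hermitian matrix `[[0, Y], [Yᴴ, 0]]`, whose nonzero eigenvalues are `±` the nonzero
singular values of `Y`. -/
def hermitianDilation (Y : Matrix α β ℂ) : Matrix (α ⊕ β) (α ⊕ β) ℂ :=
  fromBlocks 0 Y Yᴴ 0

theorem isHermitian_hermitianDilation (Y : Matrix α β ℂ) : (hermitianDilation Y).IsHermitian := by
  rw [hermitianDilation, IsHermitian, fromBlocks_conjTranspose]
  simp

theorem hermitianDilation_submatrix {α' β' : Type*} (Y : Matrix α β ℂ) (e : α' → α)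
    (f : β' → β) : hermitianDilation (Y.submatrix e f) =
      (hermitianDilation Y).submatrix (Sum.map e f) (Sum.map e f) := by
  ext (i | i) (j | j) <;> rfl

open Polynomial

variable [Fintype α] [DecidableEq α] [Fintype β] [DecidableEq β]

-- Column reduction: `[[X, -A], [-B, X]] * [[1, A], [0, X]] = [[X, 0], [-B, X² - B A]]`.
theorem charpoly_fromBlocks_zero_diag {R : Type*} [CommRing R] (A : Matrix α β R)
    (B : Matrix β α R) : (fromBlocks 0 A B 0).charpoly * X ^ Fintype.card β =
      X ^ Fintype.card α * (B * A).charpoly.comp (X ^ 2) := by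
  have hreduce : (fromBlocks 0 A B 0).charmatrix * fromBlocks 1 (A.map C) 0 (scalar β X) =
      fromBlocks (scalar α X) 0 (-B.map C)
        ((B * A).charmatrix.map (compRingHom (X ^ 2 : R[X]))) := by
    rw [charmatrix_fromBlocks, fromBlocks_multiply]
    congr 1
    · simp [charmatrix]
    · ext i j : 2
      simp [charmatrix]
    · simp
    · ext i j : 2
      have hscalar : charmatrix (0 : Matrix β β R) = scalar β X := by simp [charmatrix]
      rw [hscalar, ← map_mul, ← pow_two]
      simp only [charmatrix, Matrix.add_apply, Matrix.neg_mul, Matrix.neg_apply, map_apply,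
        Matrix.sub_apply, RingHom.mapMatrix_apply, map_sub, coe_compRingHom_apply, C_comp,
        ← Matrix.map_mul]
      by_cases hij : i = j
      · subst hij
        simp
        ring
      · simp [hij]
  have hdet := congrArg det hreduce
  rw [det_mul, det_fromBlocks_zero₂₁, det_fromBlocks_zero₁₂, det_one, one_mul,
    ← RingHom.mapMatrix_apply, ← RingHom.map_det] at hdet
  simpa [charpoly] using hdet

theorem charpoly_hermitianDilation_of_charpoly_eq {p q : ℕ} (hpq : q ≤ p)
    {Y : Matrix (Fin p) (Fin q) ℂ} {s : Fin q → ℝ}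
    (h : (Yᴴ * Y).charpoly = polyOfRoots fun i => s i ^ 2) :
    (hermitianDilation Y).charpoly = polyOfRoots (hatPQ p q s) := by
  have hY := charpoly_fromBlocks_zero_diag Y Yᴴ
  rw [h, Fintype.card_fin, Fintype.card_fin] at hY
  refine mul_right_cancel₀ (pow_ne_zero q (X_ne_zero (R := ℂ))) (hY.trans ?_)
  rw [polyOfRoots, polyOfRoots, prod_hatPQ hpq s fun x => X - C (x : ℂ), mul_right_comm,
    Complex.ofReal_zero, C_0, sub_zero, ← pow_add, Nat.sub_add_cancel hpq, prod_comp]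
  congr 1
  refine Finset.prod_congr rfl fun i _ => ?_
  simp only [sub_comp, X_comp, C_comp, pow_comp, Complex.ofReal_pow, Complex.ofReal_neg, C_pow,
    C_neg]
  ring

end HermitianDilation

section SingularValues

open Polynomial

variable {p q : ℕ}

open scoped ComplexOrder in
theorem eigVec_mul_conjTranspose_nonneg (Y : Matrix (Fin p) (Fin q) ℂ) (i : Fin p) :
    0 ≤ eigVec (Y * Yᴴ) (isHermitian_mul_conjTranspose_self Y) i :=
  (posSemidef_self_mul_conjTranspose Y).eigenvalues_nonneg _

theorem sval_apply (Y : Matrix (Fin p) (Fin q) ℂ) (i : Fin p) :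
    sval Y i = √(eigVec (Y * Yᴴ) (isHermitian_mul_conjTranspose_self Y) i) := by
  rw [sval, dif_pos i.isLt]

theorem sval_of_le (Y : Matrix (Fin p) (Fin q) ℂ) {i : ℕ} (h : p ≤ i) : sval Y i = 0 :=
  dif_neg h.not_gt

theorem sval_nonneg (Y : Matrix (Fin p) (Fin q) ℂ) (i : ℕ) : 0 ≤ sval Y i := by
  rw [sval]
  split_ifs
  · exact Real.sqrt_nonneg _
  · exact le_rfl

theorem antitone_sval (Y : Matrix (Fin p) (Fin q) ℂ) : Antitone (sval Y) := by
  intro i j hij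
  rcases lt_or_ge j p with hj | hj
  · rw [sval, sval, dif_pos hj, dif_pos (hij.trans_lt hj)]
    exact Real.sqrt_le_sqrt
      (antitone_eigVec (isHermitian_mul_conjTranspose_self Y) (Fin.mk_le_mk.2 hij))
  · rw [sval_of_le Y hj]
    exact sval_nonneg Y i

theorem charpoly_mul_conjTranspose_self (Y : Matrix (Fin p) (Fin q) ℂ) :
    (Y * Yᴴ).charpoly = polyOfRoots fun i : Fin p => sval Y i ^ 2 := by
  rw [charpoly_eq_polyOfRoots_eigVec (isHermitian_mul_conjTranspose_self Y)]
  congr 1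
  funext i
  rw [sval_apply, Real.sq_sqrt (eigVec_mul_conjTranspose_nonneg Y i)]

theorem charpoly_conjTranspose_mul_self (Y : Matrix (Fin p) (Fin q) ℂ) :
    (Yᴴ * Y).charpoly = polyOfRoots fun i : Fin q => sval Yᴴ i ^ 2 := by
  simpa only [conjTranspose_conjTranspose] using charpoly_mul_conjTranspose_self Yᴴ

theorem polyOfRoots_sval_conjTranspose_sq (hpq : q ≤ p) (Y : Matrix (Fin p) (Fin q) ℂ) :
    (polyOfRoots fun i : Fin p => sval Y i ^ 2) =
      polyOfRoots fun i : Fin p => sval Yᴴ i ^ 2 := by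
  rw [← charpoly_mul_conjTranspose_self, charpoly_mul_comm_of_le Y Yᴴ (by simpa using hpq),
    charpoly_conjTranspose_mul_self]
  obtain ⟨r, rfl⟩ := Nat.exists_eq_add_of_le hpq
  simp [polyOfRoots, Fin.prod_univ_add, sval_of_le Yᴴ, mul_comm]

theorem sval_conjTranspose (hpq : q ≤ p) (Y : Matrix (Fin p) (Fin q) ℂ) (i : Fin q) :
    sval Yᴴ i = sval Y i := by
  have hanti {a b c : ℕ} (Z : Matrix (Fin a) (Fin b) ℂ) :
      Antitone fun j : Fin c => sval Z j ^ 2 := fun j k hjk =>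
    pow_le_pow_left₀ (sval_nonneg _ _) (antitone_sval Z hjk) 2
  have hsq : sval Y i ^ 2 = sval Yᴴ i ^ 2 := congrFun
    ((polyOfRoots_inj (hanti Y) (hanti Yᴴ)).1 (polyOfRoots_sval_conjTranspose_sq hpq Y))
    (Fin.castLE hpq i)
  exact ((sq_eq_sq₀ (sval_nonneg _ _) (sval_nonneg _ _)).1 hsq).symm

theorem forall_eq_sval_iff (hpq : q ≤ p) (Y : Matrix (Fin p) (Fin q) ℂ) {s : Fin q → ℝ}
    (hs : Antitone s) (hs0 : ∀ i, 0 ≤ s i) :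
    (∀ i : Fin q, s i = sval Y i) ↔
      (hermitianDilation Y).charpoly = polyOfRoots (hatPQ p q s) := by
  have hY : (hermitianDilation Y).charpoly = polyOfRoots (hatPQ p q fun i => sval Y i) :=
    charpoly_hermitianDilation_of_charpoly_eq hpq <| by
      simp_rw [charpoly_conjTranspose_mul_self, sval_conjTranspose hpq]
  have hanti : Antitone (hatPQ p q fun i => sval Y i) :=
    antitone_hatPQ (fun _ _ h => antitone_sval Y h) fun _ => sval_nonneg _ _
  rw [hY, polyOfRoots_inj hanti (antitone_hatPQ hs hs0), hatPQ_injective.eq_iff, eq_comm,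
    funext_iff]

theorem exists_charpoly_hermitianDilation_eq (hpq : q ≤ p) (s : Fin q → ℝ) :
    ∃ Y : Matrix (Fin p) (Fin q) ℂ,
      (hermitianDilation Y).charpoly = polyOfRoots (hatPQ p q s) := by
  set Y : Matrix (Fin p) (Fin q) ℂ := of fun i j => if i = Fin.castLE hpq j then (s j : ℂ) else 0
    with hY
  refine ⟨Y, charpoly_hermitianDilation_of_charpoly_eq hpq ?_⟩
  have hYY : Yᴴ * Y = diagonal fun i => ((s i ^ 2 : ℝ) : ℂ) := by
    ext i j
    rw [mul_apply, Finset.sum_eq_single (Fin.castLE hpq j)]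
    · rcases eq_or_ne i j with rfl | hij
      · simp [hY, pow_two]
      · simp [hY, hij, hij.symm]
    · intro k _ hk
      simp [hY, hk]
    · simp
  rw [hYY, charpoly_diagonal, polyOfRoots]

end SingularValues

section DiagonalBlocks

variable {α β ι : Type*} [Fintype ι] [DecidableEq ι]

theorem charpoly_conjBy (u : unitary (Matrix ι ι ℂ)) (X : Matrix ι ι ℂ) :
    (conjBy u X).charpoly = X.charpoly := by
  rw [Unitary.conjStarAlgAut_apply, charpoly_mul_comm, ← mul_assoc,
    Unitary.star_mul_self_of_mem u.2, one_mul]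

theorem exists_conjBy_eq_of_charpoly_eq {X Y : Matrix ι ι ℂ} (hX : X.IsHermitian)
    (hY : Y.IsHermitian) (h : X.charpoly = Y.charpoly) :
    ∃ u : unitary (Matrix ι ι ℂ), conjBy u X = Y := by
  refine ⟨hY.eigenvectorUnitary * star hX.eigenvectorUnitary, ?_⟩
  have hdiag : conjBy (star hX.eigenvectorUnitary) X = realDiagonal hX.eigenvalues := by
    conv_lhs => arg 2; rw [hX.spectral_theorem]
    exact conjBy_star_conjBy _ _
  rw [Unitary.conjStarAlgAut_mul_apply, hdiag, (hX.eigenvalues_eq_eigenvalues_iff hY).2 h]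
  exact hY.spectral_theorem.symm

theorem blockPart_isLeft (M : Matrix (α ⊕ β) (α ⊕ β) ℂ) :
    blockPart Sum.isLeft M = fromBlocks M.toBlocks₁₁ 0 0 M.toBlocks₂₂ := by
  ext (i | i) (j | j) <;> simp [mask_apply, toBlocks₁₁, toBlocks₂₂]

theorem blockSupported_isLeft_fromBlocks (X : Matrix α α ℂ) (Y : Matrix β β ℂ) :
    BlockSupported Sum.isLeft (fromBlocks X 0 0 Y) := by
  rintro (i | i) (j | j) hij
  · rfl
  · exact absurd rfl hij
  · exact absurd rfl hij
  · rfl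

variable [Fintype α] [DecidableEq α] [Fintype β] [DecidableEq β]

theorem exists_blockPart_conjBy_eq_fromBlocks {M : Matrix (α ⊕ β) (α ⊕ β) ℂ}
    (hM : M.IsHermitian) {S : Matrix α α ℂ} {T : Matrix β β ℂ} (hS : S.IsHermitian)
    (hT : T.IsHermitian) (hMS : M.toBlocks₁₁.charpoly = S.charpoly)
    (hMT : M.toBlocks₂₂.charpoly = T.charpoly) :
    ∃ u : unitary (Matrix (α ⊕ β) (α ⊕ β) ℂ),
      blockPart Sum.isLeft (conjBy u M) = fromBlocks S 0 0 T := by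
  obtain ⟨u, hu⟩ := exists_conjBy_eq_of_charpoly_eq
    (show M.toBlocks₁₁.IsHermitian from hM.submatrix Sum.inl) hS hMS
  obtain ⟨v, hv⟩ := exists_conjBy_eq_of_charpoly_eq
    (show M.toBlocks₂₂.IsHermitian from hM.submatrix Sum.inr) hT hMT
  let w : Matrix (α ⊕ β) (α ⊕ β) ℂ := fromBlocks u 0 0 v
  have hw : w ∈ unitary (Matrix (α ⊕ β) (α ⊕ β) ℂ) := by
    have huu : (u : Matrix α α ℂ) * (u : Matrix α α ℂ)ᴴ = 1 := Unitary.coe_mul_star_self u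
    have hvv : (v : Matrix β β ℂ) * (v : Matrix β β ℂ)ᴴ = 1 := Unitary.coe_mul_star_self v
    rw [mem_unitaryGroup_iff, star_eq_conjTranspose]
    simp [w, fromBlocks_conjTranspose, fromBlocks_multiply, huu, hvv]
  refine ⟨⟨w, hw⟩, ?_⟩
  rw [blockPart_conjBy (blockSupported_isLeft_fromBlocks _ _), blockPart_isLeft, ← hu, ← hv]
  simp only [Unitary.conjStarAlgAut_apply, w, star_eq_conjTranspose, fromBlocks_conjTranspose,
    fromBlocks_multiply, conjTranspose_zero, Matrix.mul_zero, Matrix.zero_mul, add_zero, zero_add]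

end DiagonalBlocks

section CornerDilation

variable {α β : Type*}

/-- The permutation exchanging the second halves of the two copies of `α ⊕ β`. It turns the
diagonal blocks of `hermitianDilation Z` into Hermitian dilations of the off-diagonal corners
of `Z`. -/
def cornerSwap : Equiv.Perm ((α ⊕ β) ⊕ (α ⊕ β)) :=
  Function.Involutive.toPerm
    (Sum.elim (Sum.elim (Sum.inl ∘ Sum.inl) (Sum.inr ∘ Sum.inr))
      (Sum.elim (Sum.inr ∘ Sum.inl) (Sum.inl ∘ Sum.inr)))
    (by rintro ((i | i) | (i | i)) <;> rfl)

theorem submatrix_cornerSwap_submatrix_cornerSwap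
    (M : Matrix ((α ⊕ β) ⊕ (α ⊕ β)) ((α ⊕ β) ⊕ (α ⊕ β)) ℂ) :
    (M.submatrix cornerSwap cornerSwap).submatrix cornerSwap cornerSwap = M := by
  ext ((i | i) | (i | i)) ((j | j) | (j | j)) <;> rfl

/-- The Hermitian dilation of `Z`, with its indices permuted by `cornerSwap`. -/
def cornerDilation (Z : Matrix (α ⊕ β) (α ⊕ β) ℂ) :
    Matrix ((α ⊕ β) ⊕ (α ⊕ β)) ((α ⊕ β) ⊕ (α ⊕ β)) ℂ :=
  (hermitianDilation Z).submatrix cornerSwap cornerSwap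

theorem isHermitian_cornerDilation (Z : Matrix (α ⊕ β) (α ⊕ β) ℂ) :
    (cornerDilation Z).IsHermitian :=
  (isHermitian_hermitianDilation Z).submatrix _

theorem toBlocks₁₁_cornerDilation (Z : Matrix (α ⊕ β) (α ⊕ β) ℂ) :
    (cornerDilation Z).toBlocks₁₁ = hermitianDilation Z.toBlocks₁₂ := by
  ext (i | i) (j | j) <;> rfl

theorem toBlocks₂₂_cornerDilation (Z : Matrix (α ⊕ β) (α ⊕ β) ℂ) :
    (cornerDilation Z).toBlocks₂₂ = hermitianDilation Z.toBlocks₂₁ᴴ := by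
  rw [hermitianDilation, conjTranspose_conjTranspose]
  ext (i | i) (j | j) <;> rfl

variable [DecidableEq α] [DecidableEq β]

/-- The diagonal sign matrix `1` on the first summand and `-1` on the second one; a Hermitian matrix
anticommutes with it exactly when it is a Hermitian dilation. -/
def blockSign : Matrix (α ⊕ β) (α ⊕ β) ℂ :=
  fromBlocks 1 0 0 (-1)

theorem isSelfAdjoint_blockSign : IsSelfAdjoint (blockSign : Matrix (α ⊕ β) (α ⊕ β) ℂ) := by
  rw [IsSelfAdjoint, blockSign, star_eq_conjTranspose, fromBlocks_conjTranspose]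
  simp

/-- The sign matrix `blockSign` with its indices permuted by `cornerSwap`. -/
def cornerSign : Matrix ((α ⊕ β) ⊕ (α ⊕ β)) ((α ⊕ β) ⊕ (α ⊕ β)) ℂ :=
  fromBlocks blockSign 0 0 (-blockSign)

theorem cornerSign_eq_submatrix :
    (cornerSign : Matrix ((α ⊕ β) ⊕ (α ⊕ β)) ((α ⊕ β) ⊕ (α ⊕ β)) ℂ) =
      blockSign.submatrix cornerSwap cornerSwap := by
  simp only [cornerSign, blockSign, ← fromBlocks_one (l := α) (m := β), fromBlocks_neg, neg_zero,
    neg_neg]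
  ext ((i | i) | (i | i)) ((j | j) | (j | j)) <;> rfl

variable [Fintype α] [Fintype β]

theorem blockSign_mul_self : (blockSign : Matrix (α ⊕ β) (α ⊕ β) ℂ) * blockSign = 1 := by
  simp [blockSign, fromBlocks_multiply]

theorem antiCommute_blockSign_hermitianDilation (Y : Matrix α β ℂ) :
    AntiCommute blockSign (hermitianDilation Y) := by
  simp [AntiCommute, SemiconjBy, blockSign, hermitianDilation, fromBlocks_multiply, fromBlocks_neg]

theorem hermitianDilation_toBlocks₁₂ {M : Matrix (α ⊕ β) (α ⊕ β) ℂ} (hM : M.IsHermitian)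
    (h : AntiCommute blockSign M) : hermitianDilation M.toBlocks₁₂ = M := by
  have hodd : blockSign * M = -M * blockSign := h
  rw [← fromBlocks_toBlocks M, blockSign, fromBlocks_neg, fromBlocks_multiply,
    fromBlocks_multiply, fromBlocks_inj] at hodd
  obtain ⟨h₁₁, -, -, h₂₂⟩ := hodd
  have h₁₁' : M.toBlocks₁₁ = 0 := by
    ext i j
    exact self_eq_neg.1 (by simpa using congrFun₂ h₁₁ i j)
  have h₂₂' : M.toBlocks₂₂ = 0 := by
    ext i j
    exact neg_eq_self.1 (by simpa using congrFun₂ h₂₂ i j)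
  have h₂₁ : M.toBlocks₂₁ = M.toBlocks₁₂ᴴ := congrArg toBlocks₂₁ hM.eq.symm
  conv_rhs => rw [← fromBlocks_toBlocks M, h₁₁', h₂₂', h₂₁]
  rfl

theorem charpoly_cornerDilation (Z : Matrix (α ⊕ β) (α ⊕ β) ℂ) :
    (cornerDilation Z).charpoly = (hermitianDilation Z).charpoly :=
  charpoly_reindex cornerSwap.symm _

theorem exists_eq_cornerDilation {M : Matrix ((α ⊕ β) ⊕ (α ⊕ β)) ((α ⊕ β) ⊕ (α ⊕ β)) ℂ}
    (hM : M.IsHermitian) (h : AntiCommute cornerSign M) : ∃ W, M = cornerDilation W := by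
  have hodd := h.submatrix cornerSwap
  rw [cornerSign_eq_submatrix, submatrix_cornerSwap_submatrix_cornerSwap] at hodd
  refine ⟨(M.submatrix cornerSwap cornerSwap).toBlocks₁₂, ?_⟩
  rw [cornerDilation, hermitianDilation_toBlocks₁₂ (hM.submatrix _) hodd,
    submatrix_cornerSwap_submatrix_cornerSwap]

theorem oddPair_cornerDilation (Z : Matrix (α ⊕ β) (α ⊕ β) ℂ) (S T : Matrix α β ℂ) :
    OddPair Sum.isLeft cornerSign
      (fromBlocks (hermitianDilation S) 0 0 (hermitianDilation T)) (cornerDilation Z) where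
  isSelfAdjoint_grading := by
    rw [cornerSign_eq_submatrix]
    exact IsHermitian.submatrix isSelfAdjoint_blockSign _
  grading_mul_self := by simp [cornerSign, fromBlocks_multiply, blockSign_mul_self]
  blockSupported_grading := blockSupported_isLeft_fromBlocks _ _
  isSelfAdjoint_left := IsHermitian.fromBlocks (isHermitian_hermitianDilation S)
    conjTranspose_zero (isHermitian_hermitianDilation T)
  isSelfAdjoint_right := isHermitian_cornerDilation Z
  antiCommute_left := by
    simp [AntiCommute, SemiconjBy, cornerSign, fromBlocks_multiply, fromBlocks_neg,
      (antiCommute_blockSign_hermitianDilation _).eq]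
  antiCommute_right := by
    rw [cornerSign_eq_submatrix]
    exact (antiCommute_blockSign_hermitianDilation Z).submatrix cornerSwap
  blockSupported_left := blockSupported_isLeft_fromBlocks _ _

theorem exists_corners_of_charpoly_eq
    {M : Matrix ((α ⊕ β) ⊕ (α ⊕ β)) ((α ⊕ β) ⊕ (α ⊕ β)) ℂ} (hM : M.IsHermitian)
    {Z : Matrix (α ⊕ β) (α ⊕ β) ℂ} {S T : Matrix α β ℂ}
    (hZ : M.charpoly = (hermitianDilation Z).charpoly)
    (hS : M.toBlocks₁₁.charpoly = (hermitianDilation S).charpoly)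
    (hT : M.toBlocks₂₂.charpoly = (hermitianDilation T).charpoly) :
    ∃ W : Matrix (α ⊕ β) (α ⊕ β) ℂ,
      (hermitianDilation W).charpoly = (hermitianDilation Z).charpoly ∧
      hermitianDilation W.toBlocks₁₂ = hermitianDilation S ∧
      hermitianDilation W.toBlocks₂₁ᴴ = hermitianDilation T := by
  obtain ⟨u, hu⟩ := exists_conjBy_eq_of_charpoly_eq (isHermitian_cornerDilation Z) hM
    ((charpoly_cornerDilation Z).trans hZ.symm)
  obtain ⟨v, hv⟩ := exists_blockPart_conjBy_eq_fromBlocks hM (isHermitian_hermitianDilation S)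
    (isHermitian_hermitianDilation T) hS hT
  have hodd := oddPair_cornerDilation Z S T
  obtain ⟨k, hJk, hk⟩ := hodd.exists_commute_blockPart_conjBy_eq
    ⟨v * u, by rw [Unitary.conjStarAlgAut_mul_apply, hu, hv]⟩
  obtain ⟨W, hW⟩ := exists_eq_cornerDilation
    (isSelfAdjoint_conjBy_iff.2 hodd.isSelfAdjoint_right)
    (conjBy_eq_self hJk.symm ▸ hodd.antiCommute_right.map (conjBy k))
  rw [hW, blockPart_isLeft, fromBlocks_inj, toBlocks₁₁_cornerDilation,
    toBlocks₂₂_cornerDilation] at hk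
  refine ⟨W, ?_, hk.1, hk.2.2.2⟩
  rw [← charpoly_cornerDilation W, ← hW, charpoly_conjBy, charpoly_cornerDilation]

end CornerDilation

section Cones

theorem charpoly_submatrix_equiv {α β : Type*} [Fintype α] [DecidableEq α] [Fintype β]
    [DecidableEq β] (e : α ≃ β) (M : Matrix β β ℂ) : (M.submatrix e e).charpoly = M.charpoly :=
  charpoly_reindex e.symm M

theorem charpoly_hermitianDilation_submatrix {α β α' β' : Type*} [Fintype α] [DecidableEq α]
    [Fintype β] [DecidableEq β] [Fintype α'] [DecidableEq α'] [Fintype β'] [DecidableEq β']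
    (Y : Matrix α β ℂ) (e : α' ≃ α) (f : β' ≃ β) :
    (hermitianDilation (Y.submatrix e f)).charpoly = (hermitianDilation Y).charpoly := by
  rw [hermitianDilation_submatrix]
  exact charpoly_submatrix_equiv (e.sumCongr f) _

theorem mem_LRcone_iff {α β : Type*} [Fintype α] [DecidableEq α] [Fintype β] [DecidableEq β]
    {m n : ℕ} (e : α ≃ Fin m) (f : β ≃ Fin n) {x : Fin (m + n) → ℝ} {y : Fin m → ℝ}
    {z : Fin n → ℝ} (hx : Antitone x) (hy : Antitone y) (hz : Antitone z) :
    (x, y, z) ∈ LRcone m n ↔ ∃ M : Matrix (α ⊕ β) (α ⊕ β) ℂ, M.IsHermitian ∧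
      M.charpoly = polyOfRoots x ∧ M.toBlocks₁₁.charpoly = polyOfRoots y ∧
      M.toBlocks₂₂.charpoly = polyOfRoots z := by
  let E : α ⊕ β ≃ Fin (m + n) := (e.sumCongr f).trans finSumFinEquiv
  have hE (M : Matrix (Fin (m + n)) (Fin (m + n)) ℂ) (hM : M.IsHermitian) :
      (x = eigVec M hM ∧
        y = eigVec (M.submatrix (Fin.castAdd n) (Fin.castAdd n)) (hM.submatrix _) ∧
        z = eigVec (M.submatrix (Fin.natAdd m) (Fin.natAdd m)) (hM.submatrix _)) ↔
      (M.submatrix E E).charpoly = polyOfRoots x ∧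
        (M.submatrix E E).toBlocks₁₁.charpoly = polyOfRoots y ∧
        (M.submatrix E E).toBlocks₂₂.charpoly = polyOfRoots z := by
    rw [eq_eigVec_iff _ hx, eq_eigVec_iff _ hy, eq_eigVec_iff _ hz, charpoly_submatrix_equiv,
      ← charpoly_submatrix_equiv e, ← charpoly_submatrix_equiv f]
    rfl
  constructor
  · rintro ⟨M, hM, h⟩
    exact ⟨M.submatrix E E, hM.submatrix _, (hE M hM).1 h⟩
  · rintro ⟨M, hM, h⟩
    refine ⟨M.submatrix E.symm E.symm, hM.submatrix _, (hE _ _).2 ?_⟩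
    rwa [submatrix_submatrix, Equiv.symm_comp_self, submatrix_id_id]

variable {p q : ℕ} {g : Fin (p + q) → ℝ} {s t : Fin q → ℝ}

theorem mem_coneS_iff (hpq : q ≤ p) (hg : Antitone g) (hg0 : ∀ i, 0 ≤ g i) (hs : Antitone s)
    (hs0 : ∀ i, 0 ≤ s i) (ht : Antitone t) (ht0 : ∀ i, 0 ≤ t i) :
    (g, s, t) ∈ coneS p q ↔ ∃ Z : Matrix (Fin p ⊕ Fin q) (Fin p ⊕ Fin q) ℂ,
      (hermitianDilation Z).charpoly = polyOfRoots (hatPQ (p + q) (p + q) g) ∧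
      (hermitianDilation Z.toBlocks₁₂).charpoly = polyOfRoots (hatPQ p q s) ∧
      (hermitianDilation Z.toBlocks₂₁ᴴ).charpoly = polyOfRoots (hatPQ p q t) := by
  let e : Fin p ⊕ Fin q ≃ Fin (p + q) := finSumFinEquiv
  have he (X : Matrix (Fin (p + q)) (Fin (p + q)) ℂ) :
      ((∀ i : Fin (p + q), g i = sval X i) ∧ (∀ i : Fin q, s i = sval (blockTR p q X) i) ∧
        (∀ i : Fin q, t i = sval (blockBL p q X) i)) ↔
      (hermitianDilation (X.submatrix e e)).charpoly = polyOfRoots (hatPQ (p + q) (p + q) g) ∧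
        (hermitianDilation (X.submatrix e e).toBlocks₁₂).charpoly = polyOfRoots (hatPQ p q s) ∧
        (hermitianDilation (X.submatrix e e).toBlocks₂₁ᴴ).charpoly =
          polyOfRoots (hatPQ p q t) := by
    have hBL (i : Fin q) : sval (blockBL p q X) i = sval (blockBL p q X)ᴴ i := by
      rw [← sval_conjTranspose hpq, conjTranspose_conjTranspose]
    simp_rw [hBL]
    rw [forall_eq_sval_iff le_rfl _ hg hg0, forall_eq_sval_iff hpq _ hs hs0,
      forall_eq_sval_iff hpq _ ht ht0, charpoly_hermitianDilation_submatrix]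
    rfl
  constructor
  · rintro ⟨X, hX⟩
    exact ⟨X.submatrix e e, (he X).1 hX⟩
  · rintro ⟨Z, hZ⟩
    refine ⟨Z.submatrix e.symm e.symm, (he _).2 ?_⟩
    rwa [submatrix_submatrix, Equiv.symm_comp_self, submatrix_id_id]

end Cones

theorem stmt_7 (p q : ℕ) (hq : 1 ≤ q) (hpq : q ≤ p)
    (g : Fin (p + q) → ℝ) (hg : Antitone g) (hg0 : ∀ i, 0 ≤ g i)
    (s : Fin q → ℝ) (hs : Antitone s) (hs0 : ∀ i, 0 ≤ s i)
    (t : Fin q → ℝ) (ht : Antitone t) (ht0 : ∀ i, 0 ≤ t i) :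
    (g, s, t) ∈ coneS p q ↔
      (hatPQ (p + q) (p + q) g, hatPQ p q s, hatPQ p q t) ∈ LRcone (p + q) (p + q) := by
  rw [mem_coneS_iff hpq hg hg0 hs hs0 ht ht0,
    mem_LRcone_iff finSumFinEquiv finSumFinEquiv (antitone_hatPQ hg hg0)
      (antitone_hatPQ hs hs0) (antitone_hatPQ ht ht0)]
  constructor
  · rintro ⟨Z, hZ, hS, hT⟩
    exact ⟨cornerDilation Z, isHermitian_cornerDilation Z, by rw [charpoly_cornerDilation, hZ],
      by rw [toBlocks₁₁_cornerDilation, hS], by rw [toBlocks₂₂_cornerDilation, hT]⟩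
  · rintro ⟨M, hM, hMg, hMs, hMt⟩
    obtain ⟨X, hX⟩ := exists_charpoly_hermitianDilation_eq le_rfl g
    obtain ⟨S, hS⟩ := exists_charpoly_hermitianDilation_eq hpq s
    obtain ⟨T, hT⟩ := exists_charpoly_hermitianDilation_eq hpq t
    have hZ := (charpoly_hermitianDilation_submatrix X finSumFinEquiv finSumFinEquiv).trans hX
    obtain ⟨W, hWZ, hWS, hWT⟩ := exists_corners_of_charpoly_eq hM
      (hMg.trans hZ.symm) (hMs.trans hS.symm) (hMt.trans hT.symm)
    exact ⟨W, by rw [hWZ, hZ], by rw [hWS, hS], by rw [hWT, hT]⟩
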